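/- Assume (A1)–(A5). Then there exists a threshold value s* ∈ [s₁, s₂) such that c*(s) = 2 for all s ∈ [0, s*] and c*(s) > 2 for all s ∈ (s*, ∞). Moreover, for s ≥ 0, the minimal traveling wave W_s (i.e. a front with speed c*(s)) satisfies W_s(ξ) = B e^{−ξ} + o(e^{−ξ}) as ξ → +∞ for some constant B > 0 if and only if s = s*. -/

import Mathlib

open Filter Asymptotics MeasureTheory Set

noncomputable section

/-- A traveling wave front with speed `c` for the nonlinearity `g`:
a decreasing `C²` solution of `W'' + c W' + g(W) = 0` connecting `1` (at `-∞`) to `0` (at `+∞`). -/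
def IsFront (g : ℝ → ℝ) (c : ℝ) (W : ℝ → ℝ) : Prop :=
  ContDiff ℝ 2 W ∧
  (∀ ξ, deriv (deriv W) ξ + c * deriv W ξ + g (W ξ) = 0) ∧
  Tendsto W atBot (nhds 1) ∧ Tendsto W atTop (nhds 0) ∧
  (∀ ξ, deriv W ξ < 0)

/-!
A front `W` of speed `c` is a curve in the phase plane: as a function of `w = W`, the quantity
`p = -W'` is positive on `(0, 1)`, vanishes at both ends and solves `p' = c - f(w; s) / p`.
Supersolutions of this equation bound trajectories leaving `(1, 0)` from above, so the minimal speed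
is nondecreasing and locally Lipschitz in `s`, and there is a largest `s*` with `c*(s*) = 2`.

At speed `2`, the front decays like `B e^{-ξ}` iff `p ≥ w - C w²` near `0`, the competing behaviour
being `ξ e^{-ξ}`. If this bound fails at `s*`, then `p` is so small at some point that, even after
`s` is slightly increased, the trajectory stays below the barrier `w - 2 M w²`; hence it still ends
at `(0, 0)`, contradicting the maximality of `s*`. If `s < s*`, the profiles at `s` and `s*` are
ordered, and if both were tangent to the diagonal to second order, their gap would be `O(w²)`, while
its differential equation makes it at least of order `w`. Above `s*`, a speed `c > 2` is
incompatible with the decay rate `1`.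
-/

open scoped Topology

theorem nonpos_of_deriv_nonneg_of_pos {D : ℝ → ℝ} {a b : ℝ} (hD : ContinuousOn D (Icc a b))
    (hb : D b ≤ 0) (hderiv : ∀ w ∈ Ioo a b, 0 < D w → ∃ d, HasDerivAt D d w ∧ 0 ≤ d)
    {w : ℝ} (hw : w ∈ Icc a b) : D w ≤ 0 := by
  by_contra! hDw
  have hsub : Icc w b ⊆ Icc a b := Icc_subset_Icc_left hw.1
  obtain ⟨z, ⟨hzmem, hDz⟩, hzleast⟩ : ∃ z, IsLeast (Icc w b ∩ D ⁻¹' Iic 0) z :=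
    (isCompact_Icc.of_isClosed_subset
      ((hD.mono hsub).preimage_isClosed_of_isClosed isClosed_Icc isClosed_Iic)
      inter_subset_left).exists_isLeast ⟨b, ⟨hw.2, le_rfl⟩, hb⟩
  have hpos : ∀ x ∈ Ioo w z, ∃ d, HasDerivAt D d x ∧ 0 ≤ d := fun x hx => by
    refine hderiv x ⟨hw.1.trans_lt hx.1, hx.2.trans_le hzmem.2⟩ (not_le.1 fun h => ?_)
    exact (hzleast ⟨⟨hx.1.le, hx.2.le.trans hzmem.2⟩, h⟩).not_gt hx.2
  have hmono : MonotoneOn D (Icc w z) := by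
    refine monotoneOn_of_deriv_nonneg (convex_Icc w z)
      (hD.mono ((Icc_subset_Icc_right hzmem.2).trans hsub)) ?_ ?_ <;> rw [interior_Icc] <;>
      intro x hx <;> obtain ⟨d, hd, hd0⟩ := hpos x hx
    exacts [hd.differentiableAt.differentiableWithinAt, hd.deriv ▸ hd0]
  exact (hDw.trans_le (hmono ⟨le_rfl, hzmem.1⟩ ⟨hzmem.1, le_rfl⟩ hzmem.1)).not_ge hDz

theorem le_of_deriv_le_of_lt {P Q : ℝ → ℝ} {a b : ℝ} (hP : ContinuousOn P (Ioc a b))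
    (hQ : ContinuousOn Q (Ioc a b)) (hb : P b ≤ Q b)
    (hderiv : ∀ w ∈ Ioo a b, Q w < P w →
      ∃ p q, HasDerivAt P p w ∧ HasDerivAt Q q w ∧ q ≤ p)
    {w : ℝ} (hw : w ∈ Ioc a b) : P w ≤ Q w := by
  have hsub : Icc w b ⊆ Ioc a b := fun x hx => ⟨hw.1.trans_le hx.1, hx.2⟩
  refine sub_nonpos.1 (nonpos_of_deriv_nonneg_of_pos (D := P - Q)
    ((hP.sub hQ).mono hsub) (sub_nonpos.2 hb) (fun x hx hlt => ?_) ⟨le_rfl, hw.2⟩)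
  obtain ⟨p, q, hp, hq, hqp⟩ := hderiv x ⟨hw.1.trans hx.1, hx.2⟩ (sub_pos.1 hlt)
  exact ⟨p - q, hp.sub hq, sub_nonneg.2 hqp⟩

theorem tendsto_atTop_of_le_deriv {f : ℝ → ℝ} {m : ℝ} (hm : 0 < m)
    (hf : ∀ᶠ x in atTop, m ≤ deriv f x) : Tendsto f atTop atTop := by
  obtain ⟨a, ha⟩ := eventually_atTop.1 hf
  have hdiff : ∀ x ∈ Ici a, DifferentiableAt ℝ f x := fun x hx =>
    differentiableAt_of_deriv_ne_zero (hm.trans_le (ha x hx)).ne'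
  have hlinear : Tendsto (fun x => m * (x - a) + f a) atTop atTop :=
    tendsto_atTop_add_const_right _ _
      ((tendsto_atTop_add_const_right _ (-a) tendsto_id).const_mul_atTop hm)
  refine tendsto_atTop_mono' _ ?_ hlinear
  filter_upwards [eventually_ge_atTop a] with x hx
  have hslope := (convex_Ici a).mul_sub_le_image_sub_of_le_deriv
    (fun y hy => (hdiff y hy).continuousAt.continuousWithinAt)
    (fun y hy => (hdiff y (interior_subset hy)).differentiableWithinAt)
    (fun y hy => ha y (interior_subset hy)) a self_mem_Ici x hx hx
  linarith

theorem exists_hasDerivAt_comp {k : ℝ → ℝ} {C : ℝ} (hk : Continuous k) (hpos : ∀ y, 0 < k y)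
    (hC : ∀ y, k y ≤ C) :
    ∃ V : ℝ → ℝ, (∀ ξ, HasDerivAt V (k (V ξ)) ξ) ∧
      Tendsto V atTop atTop ∧ Tendsto V atBot atBot := by
  -- `V` is the inverse of the travel time `T y = ∫₀^y dz / k z`.
  set T : ℝ → ℝ := fun y => ∫ z in (0 : ℝ)..y, (k z)⁻¹
  have hkinv : Continuous fun z => (k z)⁻¹ := hk.inv₀ fun y => (hpos y).ne'
  have hT : ∀ y, HasDerivAt T (k y)⁻¹ y := fun y =>
    intervalIntegral.integral_hasDerivAt_right (hkinv.intervalIntegrable _ _)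
      hkinv.stronglyMeasurable.stronglyMeasurableAtFilter hkinv.continuousAt
  have hTmono : StrictMono T := strictMono_of_deriv_pos fun y =>
    (hT y).deriv ▸ inv_pos.2 (hpos y)
  have hCinv : ∀ y, C⁻¹ ≤ (k y)⁻¹ := fun y => inv_anti₀ (hpos y) (hC y)
  have hCpos : 0 < C⁻¹ := inv_pos.2 ((hpos 0).trans_le (hC 0))
  have hTtop : Tendsto T atTop atTop := tendsto_atTop_of_le_deriv hCpos <|
    .of_forall fun y => (hT y).deriv ▸ hCinv y
  have hTneg : ∀ y, HasDerivAt (fun y => -T (-y)) (k (-y))⁻¹ y := fun y => by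
    simpa [Function.comp_def] using ((hT (-y)).comp y (hasDerivAt_neg y)).fun_neg
  have hTbot : Tendsto T atBot atBot := by
    have := (tendsto_atTop_of_le_deriv hCpos <|
      .of_forall fun y => (hTneg y).deriv ▸ hCinv (-y)).comp tendsto_neg_atBot_atTop
    simpa [Function.comp_def] using this
  have hTcont : Continuous T := continuous_iff_continuousAt.2 fun y => (hT y).continuousAt
  let e : ℝ ≃o ℝ := hTmono.orderIsoOfSurjective T (hTcont.surjective hTtop hTbot)
  refine ⟨e.symm, fun ξ => ?_, e.symm.tendsto_atTop, e.symm.tendsto_atBot⟩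
  simpa using (hT (e.symm ξ)).of_local_left_inverse e.symm.continuous.continuousAt
    (inv_pos.2 (hpos _)).ne' (.of_forall e.apply_symm_apply)

/-- The bounded solution `u` of `u' = A u - φ` for `0 < A` and a bounded continuous source `φ`:
variation of constants, integrated from `+∞`. -/
def boundedSolution (A : ℝ) (φ : ℝ → ℝ) (y : ℝ) : ℝ :=
  Real.exp (A * y) * ∫ z in Ioi y, Real.exp (-A * z) * φ z

namespace boundedSolution

variable {A C : ℝ} {φ ψ : ℝ → ℝ}

theorem integrableOn (hA : 0 < A) (hφ : Continuous φ) (hC : ∀ z, |φ z| ≤ C) (y : ℝ) :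
    IntegrableOn (fun z => Real.exp (-A * z) * φ z) (Ioi y) :=
  (integrableOn_exp_mul_Ioi (neg_neg_of_pos hA) y).mul_bdd
    hφ.aestronglyMeasurable (.of_forall hC)

theorem abs_le (hA : 0 < A) (hC : ∀ z, |φ z| ≤ C) (y : ℝ) :
    |boundedSolution A φ y| ≤ C / A := by
  have hintegral : |∫ z in Ioi y, Real.exp (-A * z) * φ z| ≤
      ∫ z in Ioi y, Real.exp (-A * z) * C :=
    norm_integral_le_of_norm_le (f := fun z => Real.exp (-A * z) * φ z)
      ((integrableOn_exp_mul_Ioi (neg_neg_of_pos hA) y).mul_const C) <| .of_forall fun z => by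
        rw [norm_mul, Real.norm_of_nonneg (Real.exp_pos _).le]
        exact mul_le_mul_of_nonneg_left (hC z) (Real.exp_pos _).le
  calc |boundedSolution A φ y|
      = Real.exp (A * y) * |∫ z in Ioi y, Real.exp (-A * z) * φ z| := by
        rw [boundedSolution, abs_mul, abs_of_pos (Real.exp_pos _)]
    _ ≤ Real.exp (A * y) * ∫ z in Ioi y, Real.exp (-A * z) * C := by gcongr
    _ = Real.exp (A * y) * Real.exp (-A * y) * (C / A) := by
        rw [integral_mul_const, integral_exp_mul_Ioi (neg_neg_of_pos hA)]
        field_simp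
    _ = C / A := by rw [← Real.exp_add]; simp

theorem hasDerivAt (hA : 0 < A) (hφ : Continuous φ) (hC : ∀ z, |φ z| ≤ C) (y : ℝ) :
    HasDerivAt (boundedSolution A φ) (A * boundedSolution A φ y - φ y) y := by
  set F : ℝ → ℝ := fun z => Real.exp (-A * z) * φ z
  have hF : Continuous F := by fun_prop
  have htail : ∀ x, ∫ z in Ioi x, F z = (∫ z in Ioi 0, F z) - ∫ z in (0 : ℝ)..x, F z := fun x => by
    rw [← intervalIntegral.integral_interval_add_Ioi (integrableOn hA hφ hC 0)
      (integrableOn hA hφ hC x), add_sub_cancel_left]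
  have hderiv : HasDerivAt (fun x => ∫ z in Ioi x, F z) (-F y) y := by
    rw [funext htail]
    simpa using (intervalIntegral.integral_hasDerivAt_right (hF.intervalIntegrable 0 y)
      hF.stronglyMeasurable.stronglyMeasurableAtFilter hF.continuousAt).const_sub
        (∫ z in Ioi 0, F z)
  have hexp : HasDerivAt (fun x => Real.exp (A * x)) (Real.exp (A * y) * A) y := by
    simpa using ((hasDerivAt_id y).const_mul A).exp
  refine (hexp.fun_mul hderiv).congr_deriv ?_
  have hcancel : Real.exp (A * y) * Real.exp (-A * y) = 1 := by rw [← Real.exp_add]; simp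
  rw [boundedSolution]
  linear_combination -(φ y) * hcancel

theorem sub {D : ℝ} (hA : 0 < A) (hφ : Continuous φ) (hC : ∀ z, |φ z| ≤ C) (hψ : Continuous ψ)
    (hD : ∀ z, |ψ z| ≤ D) (y : ℝ) :
    boundedSolution A φ y - boundedSolution A ψ y =
      boundedSolution A (fun z => φ z - ψ z) y := by
  simp only [boundedSolution, mul_sub]
  rw [integral_sub (integrableOn hA hφ hC y) (integrableOn hA hψ hD y), mul_sub]

end boundedSolution

theorem exists_bounded_hasDerivAt {N : ℝ → ℝ → ℝ} {A k C : ℝ}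
    (hN : Continuous (Function.uncurry N)) (hk : 0 ≤ k) (hkA : k < A)
    (hlip : ∀ y u v, |N y u - N y v| ≤ k * |u - v|) (hC : ∀ y, |N y 0| ≤ C) :
    ∃ (u : ℝ → ℝ) (R : ℝ), (∀ y, |u y| ≤ R) ∧ ∀ y, HasDerivAt u (A * u y - N y (u y)) y := by
  open scoped BoundedContinuousFunction in
  have hA : 0 < A := hk.trans_lt hkA
  have hcont : ∀ u : ℝ →ᵇ ℝ, Continuous fun y => N y (u y) := fun u =>
    hN.comp (continuous_id.prodMk u.continuous)
  have hbound : ∀ (u : ℝ →ᵇ ℝ) (y : ℝ), |N y (u y)| ≤ C + k * ‖u‖ := fun u y => by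
    have hdiff : |N y (u y) - N y 0| ≤ k * ‖u‖ :=
      (hlip y _ _).trans (by simpa using mul_le_mul_of_nonneg_left (u.norm_coe_le_norm y) hk)
    linarith [abs_sub_abs_le_abs_sub (N y (u y)) (N y 0), hC y]
  let Φ : (ℝ →ᵇ ℝ) → ℝ →ᵇ ℝ := fun u =>
    BoundedContinuousFunction.ofNormedAddCommGroup (boundedSolution A fun y => N y (u y))
      (continuous_iff_continuousAt.2 fun y =>
        (boundedSolution.hasDerivAt hA (hcont u) (hbound u) y).continuousAt)
      _ (boundedSolution.abs_le hA (hbound u))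
  have hΦ : ContractingWith ⟨k / A, div_nonneg hk hA.le⟩ Φ := by
    refine ⟨(div_lt_one hA).2 hkA, LipschitzWith.of_dist_le_mul fun u v => ?_⟩
    refine (BoundedContinuousFunction.dist_le (mul_nonneg (div_nonneg hk hA.le) dist_nonneg)).2
      fun y => ?_
    calc dist (Φ u y) (Φ v y)
        = |boundedSolution A (fun z => N z (u z) - N z (v z)) y| := by
          rw [Real.dist_eq, ← boundedSolution.sub hA (hcont u) (hbound u) (hcont v) (hbound v)]
          rfl
      _ ≤ k * dist u v / A := boundedSolution.abs_le hA (fun z => (hlip z _ _).trans <|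
          mul_le_mul_of_nonneg_left (u.dist_coe_le_dist z) hk) y
      _ = k / A * dist u v := by ring
  set u := hΦ.fixedPoint
  have hfix : boundedSolution A (fun y => N y (u y)) = u :=
    congrArg DFunLike.coe hΦ.fixedPoint_isFixedPt
  refine ⟨u, ‖u‖, u.norm_coe_le_norm, fun y => ?_⟩
  simpa only [hfix] using boundedSolution.hasDerivAt hA (hcont u) (hbound u) y

/-- A monostable nonlinearity on `(0, 1)`, continuous and comparable to the logistic one
`w (1 - w)` with constants `κ` and `K`. -/
structure IsMonostable (κ K : ℝ) (g : ℝ → ℝ) : Prop where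
  const_pos : 0 < κ
  continuousOn : ContinuousOn g (Ioo 0 1)
  le_map : ∀ w ∈ Ioo (0 : ℝ) 1, κ * (w * (1 - w)) ≤ g w
  map_le : ∀ w ∈ Ioo (0 : ℝ) 1, g w ≤ K * (w * (1 - w))

/-- A trajectory leaving the rest state `(1, 0)` in the phase plane of `W'' + c W' + g(W) = 0`,
written as a graph `p` over `w = W`, where `p = -W'`. -/
structure IsTrajectory (g : ℝ → ℝ) (c : ℝ) (p : ℝ → ℝ) : Prop where
  continuousOn : ContinuousOn p (Ioc 0 1)
  map_one : p 1 = 0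
  pos : ∀ w ∈ Ioo (0 : ℝ) 1, 0 < p w
  hasDerivAt : ∀ w ∈ Ioo (0 : ℝ) 1, HasDerivAt p (c - g w / p w) w

theorem mul_one_sub_pos {w : ℝ} (hw : w ∈ Ioo (0 : ℝ) 1) : 0 < w * (1 - w) :=
  mul_pos hw.1 (sub_pos.2 hw.2)

theorem exists_pos_mul_add_le (c : ℝ) {κ : ℝ} (hκ : 0 < κ) : ∃ ε > 0, ε * (c + ε) ≤ κ := by
  refine ⟨κ / (|c| + κ + 1), by positivity, ?_⟩
  rw [div_mul_eq_mul_div, div_le_iff₀ (by positivity)]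
  have hle : c + κ / (|c| + κ + 1) ≤ |c| + κ + 1 := by
    have : κ / (|c| + κ + 1) ≤ κ :=
      div_le_self hκ.le (by linarith [abs_nonneg c])
    linarith [le_abs_self c]
  exact mul_le_mul_of_nonneg_left hle hκ.le

namespace IsMonostable

variable {κ K c ε : ℝ} {g : ℝ → ℝ}

theorem pos (hg : IsMonostable κ K g) {w : ℝ} (hw : w ∈ Ioo (0 : ℝ) 1) : 0 < g w :=
  (mul_pos hg.const_pos (mul_one_sub_pos hw)).trans_le (hg.le_map w hw)

theorem const_le (hg : IsMonostable κ K g) : κ ≤ K := by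
  have hhalf : (1 / 2 : ℝ) ∈ Ioo (0 : ℝ) 1 := by norm_num
  exact le_of_mul_le_mul_right ((hg.le_map _ hhalf).trans (hg.map_le _ hhalf))
    (mul_one_sub_pos hhalf)

theorem barrier_le (hg : IsMonostable κ K g) (hε : 0 < ε) (hεκ : ε * (c + ε) ≤ κ) {P : ℝ → ℝ}
    (hP : ContinuousOn P (Ioc 0 1)) (hP1 : 0 ≤ P 1)
    (hderiv : ∀ w ∈ Ioo (0 : ℝ) 1, P w < ε * (w * (1 - w)) →
      ∃ d ≤ c - g w / (ε * (w * (1 - w))), HasDerivAt P d w)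
    {w : ℝ} (hw : w ∈ Ioc (0 : ℝ) 1) : ε * (w * (1 - w)) ≤ P w := by
  refine le_of_deriv_le_of_lt (P := fun w => ε * (w * (1 - w))) (by fun_prop) hP
    (by simpa using hP1) (fun x hx hlt => ?_) hw
  obtain ⟨d, hd, hPd⟩ := hderiv x hx hlt
  have hbarrier : HasDerivAt (fun w => ε * (w * (1 - w))) (ε * (1 - 2 * x)) x :=
    (((hasDerivAt_id' x).fun_mul ((hasDerivAt_id' x).const_sub 1)).const_mul ε).congr_deriv
      (by ring)
  refine ⟨_, d, hbarrier, hPd, hd.trans ?_⟩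
  have hquot : c + ε ≤ g x / (ε * (x * (1 - x))) := by
    rw [le_div_iff₀ (mul_pos hε (mul_one_sub_pos hx))]
    calc (c + ε) * (ε * (x * (1 - x))) = ε * (c + ε) * (x * (1 - x)) := by ring
      _ ≤ κ * (x * (1 - x)) := mul_le_mul_of_nonneg_right hεκ (mul_one_sub_pos hx).le
      _ ≤ g x := hg.le_map x hx
  linarith [mul_le_mul_of_nonneg_left (by linarith [hx.2] : -1 ≤ 1 - 2 * x) hε.le]

end IsMonostable

theorem IsTrajectory.barrier_le {κ K c ε : ℝ} {g p : ℝ → ℝ} (hp : IsTrajectory g c p)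
    (hg : IsMonostable κ K g) (hε : 0 < ε) (hεκ : ε * (c + ε) ≤ κ)
    {w : ℝ} (hw : w ∈ Ioc (0 : ℝ) 1) : ε * (w * (1 - w)) ≤ p w := by
  refine hg.barrier_le hε hεκ hp.continuousOn hp.map_one.ge (fun x hx hlt => ?_) hw
  refine ⟨_, ?_, hp.hasDerivAt x hx⟩
  gcongr
  · exact (hg.pos hx).le
  · exact hp.pos x hx

theorem abs_mul_sub_div_max_sub_le {a b k m u v : ℝ} (hm : 0 < m) (hb : 0 ≤ b)
    (hbk : b ≤ k * m ^ 2) :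
    |(k * u - a + b / max u m) - (k * v - a + b / max v m)| ≤ k * |u - v| := by
  wlog huv : v ≤ u generalizing u v
  · rw [abs_sub_comm, abs_sub_comm u]
    exact this (le_of_not_ge huv)
  have hu : m ≤ max u m := le_max_right _ _
  have hv : m ≤ max v m := le_max_right _ _
  have hmono : max v m ≤ max u m := max_le_max_right m huv
  have hlip : max u m - max v m ≤ u - v := by
    simpa [abs_of_nonneg, huv, hmono] using abs_max_sub_max_le_abs u v m
  have hk : 0 ≤ k := nonneg_of_mul_nonneg_left (hb.trans hbk) (by positivity)
  have hquot : b / (max u m * max v m) ≤ k := by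
    rw [div_le_iff₀ (by positivity)]
    exact hbk.trans (mul_le_mul_of_nonneg_left (by nlinarith) hk)
  have hdiff : b / max v m - b / max u m = b / (max u m * max v m) * (max u m - max v m) := by
    have := (hm.trans_le hu).ne'
    have := (hm.trans_le hv).ne'
    field_simp
  have hnonneg : 0 ≤ b / max v m - b / max u m := by
    rw [hdiff]
    have := hm.trans_le hu
    have := hm.trans_le hv
    exact mul_nonneg (by positivity) (sub_nonneg.2 hmono)
  have hle : b / max v m - b / max u m ≤ k * (u - v) := by
    rw [hdiff]
    exact mul_le_mul hquot hlip (sub_nonneg.2 hmono) hk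
  rw [abs_of_nonneg (sub_nonneg.2 huv), abs_le]
  constructor <;> linarith

theorem exists_bounded_hasDerivAt_truncated {s G : ℝ → ℝ} {ε K : ℝ} (c : ℝ) (hs : Continuous s)
    (hs0 : ∀ y, 0 < s y) (hs1 : ∀ y, s y ≤ 1) (hG : Continuous G) (hG0 : ∀ y, 0 ≤ G y)
    (hGK : ∀ y, G y ≤ K) (hε : 0 < ε) :
    ∃ (u : ℝ → ℝ) (R : ℝ), (∀ y, |u y| ≤ R) ∧ ∀ y,
      HasDerivAt u (u y + c * s y ^ 2 - s y ^ 4 * G y / max (u y) (ε * s y ^ 2)) y := by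
  have hK : 0 ≤ K := (hG0 0).trans (hGK 0)
  have hεs : ∀ y, 0 < ε * s y ^ 2 := fun y => mul_pos hε (pow_pos (hs0 y) 2)
  have hs4 : ∀ y, 0 ≤ s y ^ 4 := fun y => (pow_pos (hs0 y) 4).le
  set N : ℝ → ℝ → ℝ := fun y v =>
    K / ε ^ 2 * v - c * s y ^ 2 + s y ^ 4 * G y / max v (ε * s y ^ 2)
  have hN : Continuous (Function.uncurry N) := by
    refine Continuous.add (by fun_prop) (Continuous.div (by fun_prop) (by fun_prop) fun q => ?_)
    exact ((hεs q.1).trans_le (le_max_right _ _)).ne'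
  have hlip : ∀ y v v', |N y v - N y v'| ≤ K / ε ^ 2 * |v - v'| := fun y v v' => by
    refine abs_mul_sub_div_max_sub_le (hεs y) (mul_nonneg (hs4 y) (hG0 y)) ?_
    calc s y ^ 4 * G y ≤ s y ^ 4 * K := mul_le_mul_of_nonneg_left (hGK y) (hs4 y)
      _ = K / ε ^ 2 * (ε * s y ^ 2) ^ 2 := by field_simp
  have hN0 : ∀ y, |N y 0| ≤ |c| + K / ε := fun y => by
    have hsq : s y ^ 2 ≤ 1 := pow_le_one₀ (hs0 y).le (hs1 y)
    have hGε : 0 ≤ G y / ε := div_nonneg (hG0 y) hε.le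
    have hN_eq : N y 0 = s y ^ 2 * (-c) + s y ^ 2 * (G y / ε) := by
      simp only [N, max_eq_right (hεs y).le]
      have := (hs0 y).ne'
      field_simp
      ring
    calc |N y 0| ≤ s y ^ 2 * |c| + s y ^ 2 * (G y / ε) := by
          rw [hN_eq]
          refine (abs_add_le _ _).trans_eq ?_
          rw [abs_mul, abs_mul, abs_neg, abs_of_nonneg (sq_nonneg (s y)), abs_of_nonneg hGε]
      _ ≤ |c| + G y / ε := add_le_add (mul_le_of_le_one_left (abs_nonneg c) hsq)
          (mul_le_of_le_one_left hGε hsq)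
      _ ≤ |c| + K / ε := by gcongr; exact hGK y
  obtain ⟨u, R, hR, hu⟩ := exists_bounded_hasDerivAt (A := 1 + K / ε ^ 2) hN (by positivity)
    (by linarith) hlip hN0
  exact ⟨u, R, hR, fun y => (hu y).congr_deriv (by ring)⟩

/-- The log-odds `log (w / (1 - w))`, the inverse of `Real.sigmoid`. -/
def logit (w : ℝ) : ℝ :=
  Real.log w - Real.log (1 - w)

theorem sigmoid_logit {w : ℝ} (hw : w ∈ Ioo (0 : ℝ) 1) : Real.sigmoid (logit w) = w := by
  have hw' : 0 < 1 - w := sub_pos.2 hw.2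
  have := hw.1.ne'
  rw [Real.sigmoid_def, logit, neg_sub, Real.exp_sub, Real.exp_log hw', Real.exp_log hw.1]
  field_simp
  ring

theorem hasDerivAt_logit {w : ℝ} (hw : w ∈ Ioo (0 : ℝ) 1) :
    HasDerivAt logit (w * (1 - w))⁻¹ w := by
  have hw0 := hw.1
  have hw1 : 0 < 1 - w := sub_pos.2 hw.2
  refine ((Real.hasDerivAt_log hw0.ne').fun_sub
    (((hasDerivAt_id' w).const_sub 1).log hw1.ne')).congr_deriv ?_
  field_simp
  ring

theorem hasDerivAt_comp_logit_mul {u : ℝ → ℝ} {d w : ℝ} (hw : w ∈ Ioo (0 : ℝ) 1)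
    (hu : HasDerivAt u d (logit w)) :
    HasDerivAt (fun w => u (logit w) * (w⁻¹ - 1)) ((d - u (logit w)) / w ^ 2) w := by
  have hw0 := hw.1
  have hw1 : 0 < 1 - w := sub_pos.2 hw.2
  refine ((hu.comp w (hasDerivAt_logit hw)).fun_mul
    ((hasDerivAt_inv hw0.ne').sub_const 1)).congr_deriv ?_
  simp only [Function.comp_apply]
  field_simp
  ring

/-- The variable `y = log (w / (1 - w))` and the unknown `u = P w / (1 - w)` turn the rest state
`(1, 0)` into `y = +∞`, where the truncated equation selects its unique bounded solution. -/
theorem IsMonostable.exists_truncatedTrajectory {κ K ε : ℝ} {g : ℝ → ℝ} (hg : IsMonostable κ K g)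
    (c : ℝ) (hε : 0 < ε) :
    ∃ P : ℝ → ℝ, ContinuousOn P (Ioc 0 1) ∧ P 1 = 0 ∧
      ∀ w ∈ Ioo (0 : ℝ) 1, HasDerivAt P (c - g w / max (P w) (ε * (w * (1 - w)))) w := by
  have hmem : ∀ y, Real.sigmoid y ∈ Ioo (0 : ℝ) 1 := fun y =>
    ⟨Real.sigmoid_pos y, Real.sigmoid_lt_one y⟩
  obtain ⟨u, R, hR, hu⟩ := exists_bounded_hasDerivAt_truncated (s := Real.sigmoid)
    (G := fun y => g (Real.sigmoid y) / (Real.sigmoid y * (1 - Real.sigmoid y))) (K := K) c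
    (by fun_prop) (fun y => (hmem y).1) (fun y => (hmem y).2.le)
    ((hg.continuousOn.comp_continuous (by fun_prop) hmem).div (by fun_prop)
      fun y => (mul_one_sub_pos (hmem y)).ne')
    (fun y => (div_pos (hg.pos (hmem y)) (mul_one_sub_pos (hmem y))).le)
    (fun y => (div_le_iff₀ (mul_one_sub_pos (hmem y))).2 (hg.map_le _ (hmem y))) hε
  set P : ℝ → ℝ := fun w => u (logit w) * (w⁻¹ - 1)
  have hP : ∀ w ∈ Ioo (0 : ℝ) 1,
      HasDerivAt P (c - g w / max (P w) (ε * (w * (1 - w)))) w := fun w hw => by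
    have hw0 := hw.1
    have hw1 : 0 < 1 - w := sub_pos.2 hw.2
    have hmax : max (P w) (ε * (w * (1 - w))) =
        (w⁻¹ - 1) * max (u (logit w)) (ε * w ^ 2) := by
      rw [mul_max_of_nonneg _ _ (sub_nonneg.2 (one_le_inv₀ hw0 |>.2 hw.2.le))]
      congr 1
      · exact mul_comm _ _
      · field_simp
    have : 0 < max (u (logit w)) (ε * w ^ 2) := lt_max_of_lt_right (by positivity)
    refine (hasDerivAt_comp_logit_mul hw (hu _)).congr_deriv ?_
    rw [hmax, sigmoid_logit hw]
    field_simp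
    ring
  refine ⟨P, fun w hw => ?_, by simp [P], hP⟩
  rcases hw.2.eq_or_lt with rfl | hw1
  · have hzero : Tendsto (fun w : ℝ => R * |w⁻¹ - 1|) (𝓝 1) (𝓝 0) := by
      have : ContinuousAt (fun w : ℝ => R * |w⁻¹ - 1|) 1 := by fun_prop (disch := norm_num)
      simpa [ContinuousAt] using this
    have : ContinuousAt P 1 := by
      rw [ContinuousAt, show P 1 = 0 by simp [P]]
      exact squeeze_zero_norm (fun w => by
        rw [norm_mul]; exact mul_le_mul_of_nonneg_right (hR _) (norm_nonneg _)) hzero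
    exact this.continuousWithinAt
  · exact (hP w ⟨hw.1, hw1⟩).continuousAt.continuousWithinAt

theorem IsMonostable.exists_isTrajectory {κ K : ℝ} {g : ℝ → ℝ} (hg : IsMonostable κ K g) (c : ℝ) :
    ∃ p, IsTrajectory g c p := by
  obtain ⟨ε, hε, hεκ⟩ := exists_pos_mul_add_le c hg.const_pos
  obtain ⟨P, hcont, hP1, hderiv⟩ := hg.exists_truncatedTrajectory c hε
  have hbarrier : ∀ w ∈ Ioo (0 : ℝ) 1, ε * (w * (1 - w)) ≤ P w := fun w hw =>
    hg.barrier_le hε hεκ hcont hP1.ge (fun x hx hlt => ⟨_, by rw [max_eq_right hlt.le],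
      hderiv x hx⟩) (Ioo_subset_Ioc_self hw)
  refine ⟨P, hcont, hP1, fun w hw => ?_, fun w hw => ?_⟩
  · exact (mul_pos hε (mul_one_sub_pos hw)).trans_le (hbarrier w hw)
  · simpa only [max_eq_left (hbarrier w hw)] using hderiv w hw

/-- A supersolution on `(0, b]` of the phase plane equation `p' = c - g / p`; trajectories lie
below it to the left of any point where they do. -/
structure IsSupersolution (g : ℝ → ℝ) (c b : ℝ) (q : ℝ → ℝ) : Prop where
  continuousOn : ContinuousOn q (Ioc 0 b)
  pos : ∀ w ∈ Ioo (0 : ℝ) b, 0 < q w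
  exists_hasDerivAt_le : ∀ w ∈ Ioo (0 : ℝ) b, ∃ d ≤ c - g w / q w, HasDerivAt q d w

/-- A trajectory from `(1, 0)` that reaches the rest state `(0, 0)`: the phase plane picture of a
front of speed `c`. -/
structure IsProfile (g : ℝ → ℝ) (c : ℝ) (p : ℝ → ℝ) : Prop extends IsTrajectory g c p where
  tendsto_zero : Tendsto p (𝓝[>] 0) (𝓝 0)

namespace IsTrajectory

variable {κ K c b δ : ℝ} {g h p q : ℝ → ℝ}

theorem le_of_isSupersolution (hp : IsTrajectory g c p) (hg : IsMonostable κ K g)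
    (hq : IsSupersolution g c b q) (hb : b ≤ 1) (hpq : p b ≤ q b)
    {w : ℝ} (hw : w ∈ Ioc 0 b) : p w ≤ q w := by
  refine le_of_deriv_le_of_lt (hp.continuousOn.mono (Ioc_subset_Ioc_right hb)) hq.continuousOn hpq
    (fun x hx hlt => ?_) hw
  have hx1 : x ∈ Ioo (0 : ℝ) 1 := Ioo_subset_Ioo_right hb hx
  obtain ⟨d, hd, hqd⟩ := hq.exists_hasDerivAt_le x hx
  exact ⟨_, d, hp.hasDerivAt x hx1, hqd, hd.trans <| sub_le_sub_left
    (div_le_div_of_nonneg_left (hg.pos hx1).le (hq.pos x hx) hlt.le) c⟩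

theorem isProfile_of_le (hp : IsTrajectory g c p) (hb : 0 < b) (hpq : ∀ w ∈ Ioc 0 b, p w ≤ q w)
    (hq : Tendsto q (𝓝[>] 0) (𝓝 0)) : IsProfile g c p := by
  refine ⟨hp, squeeze_zero' ?_ ?_ hq⟩
  · filter_upwards [Ioo_mem_nhdsGT one_pos] with w hw using (hp.pos w hw).le
  · filter_upwards [Ioc_mem_nhdsGT hb] with w hw using hpq w hw

theorem isSupersolution_of_le_add (hp : IsTrajectory g c p)
    (hle : ∀ w ∈ Ioo (0 : ℝ) 1, h w ≤ g w + δ * p w) : IsSupersolution h (c + δ) 1 p := by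
  refine ⟨hp.continuousOn, hp.pos, fun w hw => ⟨_, ?_, hp.hasDerivAt w hw⟩⟩
  have hpw := hp.pos w hw
  have hquot : h w / p w ≤ g w / p w + δ := by
    rw [div_add' _ _ _ hpw.ne']
    exact div_le_div_of_nonneg_right (hle w hw) hpw.le
  linarith

theorem isSupersolution_add (hp : IsTrajectory g c p) (hg : IsMonostable κ K g) (hδ : 0 ≤ δ)
    (hle : ∀ w ∈ Ioo (0 : ℝ) 1, h w ≤ g w + δ ^ 2 * (1 - w)) :
    IsSupersolution h c 1 (fun w => p w + δ * (1 - w)) := by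
  have hδw : ∀ w ∈ Ioo (0 : ℝ) 1, 0 ≤ δ * (1 - w) := fun w hw =>
    mul_nonneg hδ (sub_nonneg.2 hw.2.le)
  have hpos : ∀ w ∈ Ioo (0 : ℝ) 1, 0 < p w + δ * (1 - w) := fun w hw =>
    add_pos_of_pos_of_nonneg (hp.pos w hw) (hδw w hw)
  refine ⟨hp.continuousOn.add (by fun_prop), hpos, fun w hw => ⟨c - g w / p w - δ, ?_,
    ((hp.hasDerivAt w hw).fun_add (((hasDerivAt_id' w).const_sub 1).const_mul δ)).congr_deriv
      (by ring)⟩⟩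
  have hpw := hp.pos w hw
  have hquot : 0 ≤ g w / p w := div_nonneg (hg.pos hw).le hpw.le
  have : h w / (p w + δ * (1 - w)) ≤ g w / p w + δ := by
    rw [div_le_iff₀ (hpos w hw)]
    calc h w ≤ g w / p w * p w + δ ^ 2 * (1 - w) := by
          rw [div_mul_cancel₀ _ hpw.ne']
          exact hle w hw
      _ ≤ (g w / p w + δ) * (p w + δ * (1 - w)) := by
          linarith [mul_nonneg hquot (hδw w hw), mul_nonneg hδ hpw.le]
  linarith

end IsTrajectory

theorem isSupersolution_sub_mul_sq {g : ℝ → ℝ} {M b : ℝ} (hM : 0 ≤ M) (hb : 8 * M * b ≤ 1)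
    (hg : ∀ w ∈ Ioo 0 b, g w ≤ w + M * w ^ 2) :
    IsSupersolution g 2 b (fun w => w - 2 * M * w ^ 2) := by
  have hsmall : ∀ w ∈ Ioo 0 b, 0 ≤ 1 - 8 * M * w := fun w hw =>
    sub_nonneg.2 ((mul_le_mul_of_nonneg_left hw.2.le (by positivity)).trans hb)
  have hpos : ∀ w ∈ Ioo 0 b, 0 < w - 2 * M * w ^ 2 := fun w hw => by
    linarith [mul_pos hw.1 (by linarith [hsmall w hw] : 0 < 1 - 2 * M * w)]
  refine ⟨by fun_prop, hpos, fun w hw => ⟨1 - 4 * M * w, ?_,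
    ((hasDerivAt_id' w).fun_sub ((hasDerivAt_pow 2 w).const_mul (2 * M))).congr_deriv
      (by norm_num; ring)⟩⟩
  have : g w / (w - 2 * M * w ^ 2) ≤ 1 + 4 * M * w := by
    rw [div_le_iff₀ (hpos w hw)]
    refine (hg w hw).trans ?_
    linarith [mul_nonneg (mul_nonneg hM (sq_nonneg w)) (hsmall w hw)]
  linarith

theorem tendsto_sub_mul_sq_nhdsGT_zero (M : ℝ) :
    Tendsto (fun w : ℝ => w - 2 * M * w ^ 2) (𝓝[>] 0) (𝓝 0) := by
  have : ContinuousAt (fun w : ℝ => w - 2 * M * w ^ 2) 0 := by fun_prop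
  simpa [ContinuousAt] using this.tendsto.mono_left nhdsWithin_le_nhds

theorem le_add_mul_mul_one_sub {a b w x : ℝ} (hw : w ∈ Icc (0 : ℝ) 1) (ha : x ≤ a * w)
    (hb : x ≤ b * (1 - w)) : x ≤ (a + b) * (w * (1 - w)) := by
  linarith [mul_le_mul_of_nonneg_right ha (sub_nonneg.2 hw.2), mul_le_mul_of_nonneg_right hb hw.1]

namespace IsProfile

variable {κ K κ' K' M c b δ : ℝ} {g h p : ℝ → ℝ}

theorem le_mul (hp : IsProfile g c p) (hg : IsMonostable κ K g) {w : ℝ}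
    (hw : w ∈ Ioo (0 : ℝ) 1) : p w ≤ c * w := by
  have hderiv : ∀ x ∈ Ioo (0 : ℝ) 1, HasDerivAt (fun x => p x - c * x) (-(g x / p x)) x :=
    fun x hx =>
      ((hp.hasDerivAt x hx).fun_sub ((hasDerivAt_id' x).const_mul c)).congr_deriv (by ring)
  have hanti : AntitoneOn (fun x => p x - c * x) (Ioo 0 1) := by
    refine antitoneOn_of_hasDerivWithinAt_nonpos (convex_Ioo 0 1)
      (fun x hx => (hderiv x hx).continuousAt.continuousWithinAt) (f' := fun x => -(g x / p x))
      ?_ ?_ <;> rw [interior_Ioo] <;> intro x hx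
    · exact (hderiv x hx).hasDerivWithinAt
    · exact neg_nonpos.2 (div_nonneg (hg.pos hx).le (hp.pos x hx).le)
  have hlim : Tendsto (fun x => p x - c * x) (𝓝[>] 0) (𝓝 0) := by
    simpa using hp.tendsto_zero.sub (((continuous_const_mul c).tendsto 0).mono_left
      nhdsWithin_le_nhds)
  refine sub_nonpos.1 (ge_of_tendsto hlim ?_)
  filter_upwards [Ioo_mem_nhdsGT hw.1] with x hx
  exact hanti ⟨hx.1, hx.2.trans hw.2⟩ hw hx.2.le

theorem speed_pos (hp : IsProfile g c p) (hg : IsMonostable κ K g) : 0 < c := by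
  have hhalf : (1 / 2 : ℝ) ∈ Ioo (0 : ℝ) 1 := by norm_num
  linarith [hp.pos _ hhalf, hp.le_mul hg hhalf]

theorem exists_le_mul_one_sub (hp : IsProfile g c p) (hg : IsMonostable κ K g) :
    ∃ C > 0, ∀ w ∈ Ioo (0 : ℝ) 1, p w ≤ C * (w * (1 - w)) := by
  obtain ⟨ε, hε, hεκ⟩ := exists_pos_mul_add_le c hg.const_pos
  have hc := hp.speed_pos hg
  have hK := hg.const_pos.trans_le hg.const_le
  refine ⟨c + K / ε, by positivity, fun w hw => le_add_mul_mul_one_sub (Ioo_subset_Icc_self hw)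
    (hp.le_mul hg hw) ?_⟩
  have hderiv : ∀ x ∈ Ioo (0 : ℝ) 1, HasDerivAt (fun x => K / ε * (1 - x) - p x)
      (g x / p x - c - K / ε) x := fun x hx =>
    ((((hasDerivAt_id' x).const_sub 1).const_mul (K / ε)).fun_sub (hp.hasDerivAt x hx)).congr_deriv
      (by ring)
  have hquot : ∀ x ∈ Ioo (0 : ℝ) 1, g x / p x ≤ K / ε := fun x hx => by
    rw [div_le_div_iff₀ (hp.pos x hx) hε]
    calc g x * ε ≤ K * (x * (1 - x)) * ε := mul_le_mul_of_nonneg_right (hg.map_le x hx) hε.le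
      _ = K * (ε * (x * (1 - x))) := by ring
      _ ≤ K * p x := mul_le_mul_of_nonneg_left
          (hp.barrier_le hg hε hεκ (Ioo_subset_Ioc_self hx)) hK.le
  have hanti : AntitoneOn (fun x => K / ε * (1 - x) - p x) (Icc w 1) := by
    refine antitoneOn_of_hasDerivWithinAt_nonpos (convex_Icc w 1)
      (ContinuousOn.sub (by fun_prop) (hp.continuousOn.mono fun x hx => ⟨hw.1.trans_le hx.1, hx.2⟩))
      (f' := fun x => g x / p x - c - K / ε) ?_ ?_ <;> rw [interior_Icc] <;> intro x hx
    · exact (hderiv x ⟨hw.1.trans hx.1, hx.2⟩).hasDerivWithinAt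
    · linarith [hquot x ⟨hw.1.trans hx.1, hx.2⟩]
  have := hanti ⟨le_rfl, hw.2.le⟩ ⟨hw.2.le, le_rfl⟩ hw.2.le
  simp only [hp.map_one, sub_self, mul_zero] at this
  linarith

theorem exists_isProfile_of_le_add (hp : IsProfile g c p) (hh : IsMonostable κ K h)
    (hle : ∀ w ∈ Ioo (0 : ℝ) 1, h w ≤ g w + δ * p w) : ∃ q, IsProfile h (c + δ) q := by
  obtain ⟨q, hq⟩ := hh.exists_isTrajectory (c + δ)
  have hqp : ∀ w ∈ Ioc (0 : ℝ) 1, q w ≤ p w := fun w => hq.le_of_isSupersolution hh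
    (hp.isSupersolution_of_le_add hle) le_rfl (hq.map_one.trans hp.map_one.symm).le
  exact ⟨q, hq.isProfile_of_le one_pos hqp hp.tendsto_zero⟩

theorem exists_isProfile_of_room (hp : IsProfile g 2 p) (hg : IsMonostable κ K g)
    (hh : IsMonostable κ' K' h) (hM : 0 ≤ M) (hb : b ∈ Ioo (0 : ℝ) 1) (hMb : 8 * M * b ≤ 1)
    (hδ : 0 ≤ δ) (hroom : p b + δ * (1 - b) ≤ b - 2 * M * b ^ 2)
    (hhM : ∀ w ∈ Ioo 0 b, h w ≤ w + M * w ^ 2)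
    (hle : ∀ w ∈ Ioo (0 : ℝ) 1, h w ≤ g w + δ ^ 2 * (1 - w)) : ∃ q, IsProfile h 2 q := by
  obtain ⟨q, hq⟩ := hh.exists_isTrajectory 2
  have hqb : q b ≤ p b + δ * (1 - b) := hq.le_of_isSupersolution hh
    (hp.isSupersolution_add hg hδ hle) le_rfl (by simp [hq.map_one, hp.map_one])
    (Ioo_subset_Ioc_self hb)
  have hqle : ∀ w ∈ Ioc 0 b, q w ≤ w - 2 * M * w ^ 2 := fun w => hq.le_of_isSupersolution hh
    (isSupersolution_sub_mul_sq hM hMb hhM) hb.2.le (hqb.trans hroom)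
  exact ⟨q, hq.isProfile_of_le hb.1 hqle (tendsto_sub_mul_sq_nhdsGT_zero M)⟩

end IsProfile

theorem contDiff_two_of_hasDerivAt {f f' f'' : ℝ → ℝ} (hf : ∀ x, HasDerivAt f (f' x) x)
    (hf' : ∀ x, HasDerivAt f' (f'' x) x) (hf'' : Continuous f'') : ContDiff ℝ 2 f := by
  rw [show (2 : WithTop ℕ∞) = 1 + 1 from rfl, contDiff_succ_iff_deriv,
    funext fun x => (hf x).deriv, contDiff_one_iff_deriv, funext fun x => (hf' x).deriv]
  exact ⟨fun x => (hf x).differentiableAt, by simp, fun x => (hf' x).differentiableAt, hf''⟩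

/-- The phase plane graph of a front: `-W'` as a function of `w = W`, and `0` off `(0, 1)`. -/
def frontProfile (W : ℝ → ℝ) : ℝ → ℝ :=
  (Ioo (0 : ℝ) 1).indicator fun w => -deriv W (Function.invFun W w)

namespace IsFront

variable {κ K c : ℝ} {g W : ℝ → ℝ}

theorem contDiff (hW : IsFront g c W) : ContDiff ℝ 2 W := hW.1

theorem tendsto_atBot (hW : IsFront g c W) : Tendsto W atBot (𝓝 1) := hW.2.2.1

theorem tendsto_atTop (hW : IsFront g c W) : Tendsto W atTop (𝓝 0) := hW.2.2.2.1

theorem deriv_neg (hW : IsFront g c W) (ξ : ℝ) : deriv W ξ < 0 := hW.2.2.2.2 ξ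

theorem strictAnti (hW : IsFront g c W) : StrictAnti W := strictAnti_of_deriv_neg hW.deriv_neg

theorem mem_Ioo (hW : IsFront g c W) (ξ : ℝ) : W ξ ∈ Ioo (0 : ℝ) 1 :=
  ⟨(hW.strictAnti.antitone.le_of_tendsto hW.tendsto_atTop (ξ + 1)).trans_lt
      (hW.strictAnti (lt_add_one ξ)),
    (hW.strictAnti (sub_one_lt ξ)).trans_le
      (hW.strictAnti.antitone.ge_of_tendsto hW.tendsto_atBot (ξ - 1))⟩

theorem hasDerivAt (hW : IsFront g c W) (ξ : ℝ) : HasDerivAt W (deriv W ξ) ξ :=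
  (hW.contDiff.differentiable two_ne_zero ξ).hasDerivAt

theorem hasDerivAt_deriv (hW : IsFront g c W) (ξ : ℝ) :
    HasDerivAt (deriv W) (-c * deriv W ξ - g (W ξ)) ξ := by
  have hdiff : Differentiable ℝ (deriv W) :=
    (hW.contDiff.deriv' (n := 1)).differentiable one_ne_zero
  exact (hdiff ξ).hasDerivAt.congr_deriv (by linarith [hW.2.1 ξ])

theorem exists_eq (hW : IsFront g c W) {w : ℝ} (hw : w ∈ Ioo (0 : ℝ) 1) : ∃ ξ, W ξ = w := by
  obtain ⟨a, ha⟩ := (hW.tendsto_atTop.eventually (ge_mem_nhds hw.1)).exists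
  obtain ⟨b, hb⟩ := (hW.tendsto_atBot.eventually (le_mem_nhds hw.2)).exists
  exact mem_range_of_exists_le_of_exists_ge hW.contDiff.continuous ⟨a, ha⟩ ⟨b, hb⟩

theorem map_atTop (hW : IsFront g c W) : map W atTop = 𝓝[>] 0 := by
  refine le_antisymm (tendsto_nhdsWithin_iff.2
    ⟨hW.tendsto_atTop, .of_forall fun ξ => (hW.mem_Ioo ξ).1⟩) fun s hs => ?_
  obtain ⟨a, ha⟩ := mem_atTop_sets.1 (mem_map.1 hs)
  filter_upwards [Ioo_mem_nhdsGT (hW.mem_Ioo a).1] with w hw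
  obtain ⟨ξ, rfl⟩ := hW.exists_eq ⟨hw.1, hw.2.trans (hW.mem_Ioo a).2⟩
  exact ha ξ (hW.strictAnti.lt_iff_gt.1 hw.2).le

theorem map_atBot (hW : IsFront g c W) : map W atBot = 𝓝[<] 1 := by
  refine le_antisymm (tendsto_nhdsWithin_iff.2
    ⟨hW.tendsto_atBot, .of_forall fun ξ => (hW.mem_Ioo ξ).2⟩) fun s hs => ?_
  obtain ⟨a, ha⟩ := mem_atBot_sets.1 (mem_map.1 hs)
  filter_upwards [Ioo_mem_nhdsLT (hW.mem_Ioo a).2] with w hw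
  obtain ⟨ξ, rfl⟩ := hW.exists_eq ⟨(hW.mem_Ioo a).1.trans hw.1, hw.2⟩
  exact ha ξ (hW.strictAnti.lt_iff_gt.1 hw.1).le

theorem neg_deriv_le (hW : IsFront g c W) (hg : IsMonostable κ K g) (ξ : ℝ) :
    -deriv W ξ ≤ (1 + |c|) * (W ξ - W (ξ + 1)) := by
  obtain ⟨t, ht, hslope⟩ := exists_deriv_eq_slope W (lt_add_one ξ)
    hW.contDiff.continuous.continuousOn
    (fun x _ => (hW.hasDerivAt x).differentiableAt.differentiableWithinAt)
  have hanti : Antitone fun x => deriv W x + c * W x := by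
    refine antitone_of_hasDerivAt_nonpos (f' := fun x => -g (W x)) (fun x => ?_)
      fun x => neg_nonpos.2 (hg.pos (hW.mem_Ioo x)).le
    exact ((hW.hasDerivAt_deriv x).fun_add ((hW.hasDerivAt x).const_mul c)).congr_deriv (by ring)
  have hdrop : c * (W ξ - W t) ≤ |c| * (W ξ - W (ξ + 1)) :=
    mul_le_mul (le_abs_self c) (sub_le_sub_left (hW.strictAnti.antitone ht.2.le) _)
      (sub_nonneg.2 (hW.strictAnti.antitone ht.1.le)) (abs_nonneg c)
  rw [add_sub_cancel_left, div_one] at hslope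
  linarith [hanti ht.1.le]

theorem tendsto_deriv (hW : IsFront g c W) (hg : IsMonostable κ K g) {l : Filter ℝ} {a : ℝ}
    (hl : Tendsto W l (𝓝 a)) (hshift : Tendsto (· + 1) l l) : Tendsto (deriv W) l (𝓝 0) := by
  have hbound : Tendsto (fun ξ => (1 + |c|) * (W ξ - W (ξ + 1))) l (𝓝 0) := by
    simpa using (hl.sub (hl.comp hshift)).const_mul (1 + |c|)
  simpa using (squeeze_zero (fun ξ => neg_nonneg.2 (hW.deriv_neg ξ).le) (hW.neg_deriv_le hg)
    hbound).neg

theorem frontProfile_apply (hW : IsFront g c W) (ξ : ℝ) : frontProfile W (W ξ) = -deriv W ξ := by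
  rw [frontProfile, indicator_of_mem (hW.mem_Ioo ξ),
    Function.leftInverse_invFun hW.strictAnti.injective ξ]

theorem hasDerivAt_frontProfile (hW : IsFront g c W) (ξ : ℝ) :
    HasDerivAt (frontProfile W) (c - g (W ξ) / frontProfile W (W ξ)) (W ξ) := by
  have hleft := Function.leftInverse_invFun hW.strictAnti.injective
  have hinv : HasDerivAt (Function.invFun W) (deriv W ξ)⁻¹ (W ξ) :=
    ((hW.contDiff.contDiffAt.hasStrictDerivAt two_ne_zero).to_local_left_inverse
      (hW.deriv_neg ξ).ne (.of_forall hleft)).hasDerivAt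
  have hcomp := (hW.hasDerivAt_deriv (Function.invFun W (W ξ))).comp (W ξ) hinv
  refine (hcomp.neg.congr_of_eventuallyEq ?_).congr_deriv ?_
  · filter_upwards [Ioo_mem_nhds (hW.mem_Ioo ξ).1 (hW.mem_Ioo ξ).2] with w hw
    exact indicator_of_mem hw _
  · rw [hW.frontProfile_apply, hleft ξ]
    have := (hW.deriv_neg ξ).ne
    field_simp
    ring

theorem isProfile_frontProfile (hW : IsFront g c W) (hg : IsMonostable κ K g) :
    IsProfile g c (frontProfile W) := by
  have hcomp : frontProfile W ∘ W = fun ξ => -deriv W ξ := funext hW.frontProfile_apply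
  have hone : frontProfile W 1 = 0 := indicator_of_notMem (by simp) _
  refine ⟨⟨fun w hw => ?_, hone, fun w hw => ?_, fun w hw => ?_⟩, ?_⟩
  · rcases hw.2.eq_or_lt with rfl | hw1
    · rw [continuousWithinAt_Ioc_iff_Iic one_pos, ← continuousWithinAt_Iio_iff_Iic,
        ContinuousWithinAt, hone, ← hW.map_atBot, tendsto_map'_iff, hcomp]
      simpa using (hW.tendsto_deriv hg hW.tendsto_atBot
        (tendsto_atBot_add_const_right _ 1 tendsto_id)).neg
    · obtain ⟨ξ, rfl⟩ := hW.exists_eq ⟨hw.1, hw1⟩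
      exact (hW.hasDerivAt_frontProfile ξ).continuousAt.continuousWithinAt
  · obtain ⟨ξ, rfl⟩ := hW.exists_eq hw
    exact hW.frontProfile_apply ξ ▸ neg_pos.2 (hW.deriv_neg ξ)
  · obtain ⟨ξ, rfl⟩ := hW.exists_eq hw
    exact hW.hasDerivAt_frontProfile ξ
  · rw [← hW.map_atTop, tendsto_map'_iff, hcomp]
    simpa using (hW.tendsto_deriv hg hW.tendsto_atTop
      (tendsto_atTop_add_const_right _ 1 tendsto_id)).neg

end IsFront

namespace IsProfile

variable {κ K c : ℝ} {g p : ℝ → ℝ}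

theorem isFront_of_hasDerivAt (hp : IsProfile g c p) (hg : IsMonostable κ K g) {W : ℝ → ℝ}
    (hW : ∀ ξ, W ξ ∈ Ioo (0 : ℝ) 1) (hbot : Tendsto W atBot (𝓝 1))
    (htop : Tendsto W atTop (𝓝 0)) (hderiv : ∀ ξ, HasDerivAt W (-p (W ξ)) ξ) :
    IsFront g c W := by
  have hderiv2 : ∀ ξ, HasDerivAt (fun ξ => -p (W ξ)) (c * p (W ξ) - g (W ξ)) ξ := fun ξ => by
    have := (hp.pos _ (hW ξ)).ne'
    refine ((hp.hasDerivAt _ (hW ξ)).comp ξ (hderiv ξ)).fun_neg.congr_deriv ?_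
    field_simp
  have hWcont : Continuous W := continuous_iff_continuousAt.2 fun ξ => (hderiv ξ).continuousAt
  have hcont : Continuous fun ξ => c * p (W ξ) - g (W ξ) :=
    (continuous_const.mul ((hp.continuousOn.mono Ioo_subset_Ioc_self).comp_continuous hWcont
      hW)).sub (hg.continuousOn.comp_continuous hWcont hW)
  refine ⟨contDiff_two_of_hasDerivAt hderiv hderiv2 hcont, fun ξ => ?_, hbot, htop, fun ξ => ?_⟩
  · rw [funext fun ξ => (hderiv ξ).deriv, (hderiv2 ξ).deriv]
    ring
  · exact (hderiv ξ).deriv ▸ neg_neg_of_pos (hp.pos _ (hW ξ))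

theorem exists_isFront (hp : IsProfile g c p) (hg : IsMonostable κ K g) : ∃ W, IsFront g c W := by
  obtain ⟨C, -, hC⟩ := hp.exists_le_mul_one_sub hg
  have hmem : ∀ y, Real.sigmoid y ∈ Ioo (0 : ℝ) 1 := fun y =>
    ⟨Real.sigmoid_pos y, Real.sigmoid_lt_one y⟩
  set k : ℝ → ℝ := fun y =>
    p (Real.sigmoid (-y)) / (Real.sigmoid (-y) * (1 - Real.sigmoid (-y)))
  have hk : Continuous k :=
    ((hp.continuousOn.mono Ioo_subset_Ioc_self).comp_continuous (by fun_prop)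
      fun y => hmem (-y)).div (by fun_prop) fun y => (mul_one_sub_pos (hmem (-y))).ne'
  obtain ⟨V, hV, hVtop, hVbot⟩ := exists_hasDerivAt_comp hk
    (fun y => div_pos (hp.pos _ (hmem _)) (mul_one_sub_pos (hmem _)))
    (fun y => (div_le_iff₀ (mul_one_sub_pos (hmem _))).2 (hC _ (hmem _)))
  refine ⟨fun ξ => Real.sigmoid (-V ξ), hp.isFront_of_hasDerivAt hg (fun ξ => hmem _)
    (Real.tendsto_sigmoid_atTop.comp (tendsto_neg_atBot_atTop.comp hVbot))
    (Real.tendsto_sigmoid_atBot.comp (tendsto_neg_atTop_atBot.comp hVtop)) fun ξ => ?_⟩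
  refine ((Real.hasDerivAt_sigmoid _).comp ξ (hV ξ).fun_neg).congr_deriv ?_
  rw [mul_neg, mul_div_cancel₀ _ (mul_one_sub_pos (hmem (-V ξ))).ne']

end IsProfile

/-- `c₀` is the minimal speed of fronts for `g`: fronts exist exactly for the speeds `c ≥ c₀`, and
`c₀` is at least the linear spreading speed `2`. -/
def IsMinimalSpeed (g : ℝ → ℝ) (c₀ : ℝ) : Prop :=
  2 ≤ c₀ ∧ ∀ c, (∃ W : ℝ → ℝ, IsFront g c W) ↔ c₀ ≤ c

namespace IsMinimalSpeed

variable {κ K c c₀ : ℝ} {g p : ℝ → ℝ}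

theorem exists_isProfile (hc₀ : IsMinimalSpeed g c₀) (hg : IsMonostable κ K g) :
    ∃ p, IsProfile g c₀ p :=
  let ⟨_, hW⟩ := (hc₀.2 c₀).2 le_rfl
  ⟨_, hW.isProfile_frontProfile hg⟩

theorem le_of_isProfile (hc₀ : IsMinimalSpeed g c₀) (hg : IsMonostable κ K g)
    (hp : IsProfile g c p) : c₀ ≤ c :=
  (hc₀.2 c).1 (hp.exists_isFront hg)

theorem eq_two_of_isProfile (hc₀ : IsMinimalSpeed g c₀) (hg : IsMonostable κ K g)
    (hp : IsProfile g 2 p) : c₀ = 2 :=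
  (hc₀.le_of_isProfile hg hp).antisymm hc₀.1

end IsMinimalSpeed

/-- The decay `W ξ = B e^{-ξ} + o(e^{-ξ})` as `ξ → +∞`, for some `B > 0`. -/
def HasFastDecay (W : ℝ → ℝ) : Prop :=
  ∃ B > (0 : ℝ), (fun ξ => W ξ - B * Real.exp (-ξ)) =o[atTop] fun ξ => Real.exp (-ξ)

theorem hasFastDecay_iff_tendsto {W : ℝ → ℝ} :
    HasFastDecay W ↔ ∃ B > 0, Tendsto (fun ξ => W ξ * Real.exp ξ) atTop (𝓝 B) := by
  refine exists_congr fun B => and_congr_right fun _ => ?_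
  have hquot : ∀ ξ, (W ξ - B * Real.exp (-ξ)) / Real.exp (-ξ) = W ξ * Real.exp ξ - B := fun ξ => by
    rw [Real.exp_neg]
    field_simp
  rw [isLittleO_iff_tendsto fun ξ h => absurd h (Real.exp_pos _).ne', funext hquot,
    tendsto_sub_nhds_zero_iff]

namespace IsFront

variable {M C c : ℝ} {g W : ℝ → ℝ}

theorem hasDerivAt_mul_exp (hW : IsFront g c W) (ξ : ℝ) :
    HasDerivAt (fun ξ => W ξ * Real.exp ξ) ((deriv W ξ + W ξ) * Real.exp ξ) ξ :=
  ((hW.hasDerivAt ξ).fun_mul (Real.hasDerivAt_exp ξ)).congr_deriv (by ring)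

theorem hasDerivAt_deriv_add_mul_exp (hW : IsFront g c W) (ξ : ℝ) :
    HasDerivAt (fun ξ => (deriv W ξ + (c - 1) * W ξ) * Real.exp ξ)
      (((c - 1) * W ξ - g (W ξ)) * Real.exp ξ) ξ :=
  (((hW.hasDerivAt_deriv ξ).fun_add ((hW.hasDerivAt ξ).const_mul (c - 1))).fun_mul
    (Real.hasDerivAt_exp ξ)).congr_deriv (by ring)

theorem not_hasFastDecay_of_two_lt (hW : IsFront g c W) (hc : 2 < c)
    (hg : ∀ w ∈ Ioo (0 : ℝ) 1, g w ≤ w + M * w ^ 2) : ¬HasFastDecay W := by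
  rw [hasFastDecay_iff_tendsto]
  rintro ⟨B, hB, hlim⟩
  have hc2 : 0 < c - 2 := sub_pos.2 hc
  have hrate : Tendsto (fun ξ => (c - 2 - M * W ξ) * (W ξ * Real.exp ξ)) atTop
      (𝓝 ((c - 2) * B)) := by
    simpa using ((hW.tendsto_atTop.const_mul M).const_sub (c - 2)).mul hlim
  have htop : Tendsto (fun ξ => (deriv W ξ + (c - 1) * W ξ) * Real.exp ξ) atTop atTop := by
    refine tendsto_atTop_of_le_deriv (m := (c - 2) * B / 2) (by positivity) ?_
    filter_upwards [hrate.eventually (le_mem_nhds (half_lt_self (mul_pos hc2 hB)))] with ξ hξ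
    rw [(hW.hasDerivAt_deriv_add_mul_exp ξ).deriv]
    calc (c - 2) * B / 2 ≤ ((c - 1) * W ξ - (W ξ + M * W ξ ^ 2)) * Real.exp ξ := by linarith
      _ ≤ ((c - 1) * W ξ - g (W ξ)) * Real.exp ξ := by gcongr; exact hg _ (hW.mem_Ioo ξ)
  refine not_tendsto_nhds_of_tendsto_atTop (tendsto_atTop_mono (fun ξ => ?_) htop) _
    (hlim.const_mul (c - 1))
  rw [← mul_assoc]
  gcongr
  linarith [hW.deriv_neg ξ]

theorem not_eventually_deriv_mul_exp_le {m : ℝ} (hW : IsFront g c W) (hm : 0 < m) :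
    ¬∀ᶠ ξ in atTop, (deriv W ξ + W ξ) * Real.exp ξ ≤ -m := fun h => by
  have htop : Tendsto (fun ξ => -(W ξ * Real.exp ξ)) atTop atTop :=
    tendsto_atTop_of_le_deriv hm <| h.mono fun ξ hξ => by
      rw [(hW.hasDerivAt_mul_exp ξ).fun_neg.deriv]
      linarith
  obtain ⟨ξ, hξ⟩ := (htop.eventually_gt_atTop 0).exists
  exact (neg_pos.1 hξ).not_ge (mul_pos (hW.mem_Ioo ξ).1 (Real.exp_pos ξ)).le

theorem neg_deriv_le_add_mul_sq (hW : IsFront g 2 W) (hM : 0 < M)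
    (hg : ∀ w ∈ Ioo (0 : ℝ) 1, w - M * w ^ 2 ≤ g w) (ξ : ℝ) :
    -deriv W ξ ≤ W ξ + M * W ξ ^ 2 := by
  by_contra! hlt
  set Z : ℝ → ℝ := fun x => (deriv W x + W x + M * W x ^ 2) * Real.exp x
  have hZ : ∀ x, HasDerivAt Z
      ((W x - g (W x) + M * W x ^ 2 + 2 * M * W x * deriv W x) * Real.exp x) x := fun x =>
    ((((hW.hasDerivAt_deriv x).fun_add (hW.hasDerivAt x)).fun_add
      (((hW.hasDerivAt x).fun_pow 2).const_mul M)).fun_mul (Real.hasDerivAt_exp x)).congr_deriv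
        (by norm_num; ring)
  have hZξ : Z ξ < 0 := mul_neg_of_neg_of_pos (by linarith) (Real.exp_pos ξ)
  have hZle : ∀ x, ξ ≤ x → Z x ≤ Z ξ := fun x hx => by
    refine image_le_of_deriv_right_lt_deriv_boundary (f := Z) (B := fun _ => Z ξ) (B' := 0)
      (fun y _ => (hZ y).continuousAt.continuousWithinAt) (fun y _ => (hZ y).hasDerivWithinAt)
      le_rfl (fun y => hasDerivAt_const y _) (fun y _ hy => ?_) ⟨hx, le_rfl⟩
    have hsum : deriv W y + W y + M * W y ^ 2 < 0 :=
      neg_of_mul_neg_left (hy ▸ hZξ : Z y < 0) (Real.exp_pos y).le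
    have hWy := hW.mem_Ioo y
    refine mul_neg_of_neg_of_pos ?_ (Real.exp_pos y)
    have : 2 * M * W y * (deriv W y + W y + M * W y ^ 2) < 0 :=
      mul_neg_of_pos_of_neg (by have := hWy.1; positivity) hsum
    have : 0 < M ^ 2 * W y ^ 3 := by have := hWy.1; positivity
    linarith [hg _ hWy]
  refine hW.not_eventually_deriv_mul_exp_le (neg_pos.2 hZξ) ?_
  filter_upwards [eventually_ge_atTop ξ] with x hx
  have : 0 ≤ M * W x ^ 2 * Real.exp x := by positivity
  linarith [hZle x hx]

theorem eventually_deriv_add_mul_exp_le {B : ℝ} (hW : IsFront g 2 W) (hM : 0 ≤ M)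
    (hg : ∀ w ∈ Ioo (0 : ℝ) 1, g w ≤ w + M * w ^ 2) (hB : 0 < B)
    (hlim : Tendsto (fun ξ => W ξ * Real.exp ξ) atTop (𝓝 B)) :
    ∀ᶠ ξ in atTop, (deriv W ξ + W ξ) * Real.exp ξ ≤ 4 * M * B ^ 2 * Real.exp (-ξ) := by
  obtain ⟨a, ha⟩ := eventually_atTop.1 (hlim.eventually (ge_mem_nhds (lt_two_mul_self hB)))
  set Y : ℝ → ℝ := fun ξ => (deriv W ξ + W ξ) * Real.exp ξ - 4 * M * B ^ 2 * Real.exp (-ξ)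
  have hY : ∀ ξ, HasDerivAt Y
      ((W ξ - g (W ξ)) * Real.exp ξ + 4 * M * B ^ 2 * Real.exp (-ξ)) ξ := fun ξ =>
    ((((hW.hasDerivAt_deriv ξ).fun_add (hW.hasDerivAt ξ)).fun_mul (Real.hasDerivAt_exp ξ)).fun_sub
      ((hasDerivAt_neg ξ).exp.const_mul (4 * M * B ^ 2))).congr_deriv (by ring)
  have hmono : MonotoneOn Y (Ici a) := by
    refine monotoneOn_of_hasDerivWithinAt_nonneg (convex_Ici a)
      (fun ξ _ => (hY ξ).continuousAt.continuousWithinAt) (fun ξ _ => (hY ξ).hasDerivWithinAt)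
      fun ξ hξ => ?_
    have hsq : (W ξ * Real.exp ξ) ^ 2 ≤ (2 * B) ^ 2 :=
      pow_le_pow_left₀ (mul_pos (hW.mem_Ioo ξ).1 (Real.exp_pos ξ)).le (ha ξ (interior_subset hξ)) 2
    calc 0 ≤ (-(M * W ξ ^ 2)) * Real.exp ξ + M * (2 * B) ^ 2 * Real.exp (-ξ) := by
          have : W ξ ^ 2 * Real.exp ξ = (W ξ * Real.exp ξ) ^ 2 * Real.exp (-ξ) := by
            rw [Real.exp_neg]
            field_simp
          linarith [mul_le_mul_of_nonneg_left
            (mul_le_mul_of_nonneg_right hsq (Real.exp_pos (-ξ)).le) hM, congrArg (M * ·) this]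
      _ ≤ (W ξ - g (W ξ)) * Real.exp ξ + 4 * M * B ^ 2 * Real.exp (-ξ) := by
          refine add_le_add ?_ (by linarith)
          gcongr
          linarith [hg _ (hW.mem_Ioo ξ)]
  filter_upwards [eventually_ge_atTop a] with ξ hξ
  by_contra! hlt
  refine not_tendsto_nhds_of_tendsto_atTop
    (tendsto_atTop_of_le_deriv (sub_pos.2 hlt) ?_) B hlim
  filter_upwards [eventually_ge_atTop ξ] with x hx
  rw [(hW.hasDerivAt_mul_exp x).deriv]
  have : 0 ≤ 4 * M * B ^ 2 * Real.exp (-x) := by positivity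
  linarith [hmono hξ (hξ.trans hx : a ≤ x) hx]

theorem eventually_deriv_add_le_of_hasFastDecay (hW : IsFront g 2 W) (hM : 0 ≤ M)
    (hg : ∀ w ∈ Ioo (0 : ℝ) 1, g w ≤ w + M * w ^ 2) (hfast : HasFastDecay W) :
    ∀ᶠ ξ in atTop, deriv W ξ + W ξ ≤ 16 * M * W ξ ^ 2 := by
  obtain ⟨B, hB, hlim⟩ := hasFastDecay_iff_tendsto.1 hfast
  filter_upwards [hW.eventually_deriv_add_mul_exp_le hM hg hB hlim,
    hlim.eventually (le_mem_nhds (half_lt_self hB))] with ξ hξ hBξ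
  refine le_of_mul_le_mul_right ?_ (Real.exp_pos ξ)
  calc (deriv W ξ + W ξ) * Real.exp ξ ≤ 16 * M * (B / 2) ^ 2 * Real.exp (-ξ) := by linarith
    _ ≤ 16 * M * (W ξ * Real.exp ξ) ^ 2 * Real.exp (-ξ) := by gcongr
    _ = 16 * M * W ξ ^ 2 * Real.exp ξ := by
        rw [Real.exp_neg]
        field_simp

theorem hasFastDecay_of_eventually_abs_le (hW : IsFront g c W)
    (h : ∀ᶠ ξ in atTop, |deriv W ξ + W ξ| ≤ C * W ξ ^ 2) : HasFastDecay W := by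
  have hpos : ∀ ξ, 0 < W ξ := fun ξ => (hW.mem_Ioo ξ).1
  have hsmall : ∀ᶠ ξ in atTop, C * W ξ ≤ 1 / 2 :=
    (hW.tendsto_atTop.const_mul C).eventually (ge_mem_nhds (by norm_num))
  obtain ⟨a, ha⟩ := eventually_atTop.1 (h.and hsmall)
  have hlog : ∀ ξ, HasDerivAt (fun ξ => Real.log (W ξ) + ξ) (deriv W ξ / W ξ + 1) ξ := fun ξ =>
    ((hW.hasDerivAt ξ).log (hpos ξ).ne').fun_add (hasDerivAt_id' ξ)
  have hbound : ∀ ξ ∈ Ioi a, |deriv W ξ / W ξ + 1| ≤ 2 * C * -deriv W ξ := fun ξ hξ => by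
    obtain ⟨habs, hCW⟩ := ha ξ (le_of_lt hξ)
    have hC : 0 ≤ C := nonneg_of_mul_nonneg_left ((abs_nonneg _).trans habs) (pow_pos (hpos ξ) 2)
    have hderiv : W ξ ≤ 2 * -deriv W ξ := by
      linarith [le_abs_self (deriv W ξ + W ξ), mul_le_mul_of_nonneg_right hCW (hpos ξ).le]
    calc |deriv W ξ / W ξ + 1| = |deriv W ξ + W ξ| / W ξ := by
          rw [div_add_one (hpos ξ).ne', abs_div, abs_of_pos (hpos ξ)]
      _ ≤ C * W ξ := by rw [div_le_iff₀ (hpos ξ)]; linarith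
      _ ≤ C * (2 * -deriv W ξ) := mul_le_mul_of_nonneg_left hderiv hC
      _ = 2 * C * -deriv W ξ := by ring
  have hint : IntegrableOn (fun ξ => deriv W ξ / W ξ + 1) (Ioi a) := by
    refine Integrable.mono' ((integrableOn_Ioi_deriv_of_nonpos'
      (fun ξ _ => hW.hasDerivAt ξ) (fun ξ _ => (hW.deriv_neg ξ).le) hW.tendsto_atTop).neg.const_mul
        (2 * C)) ?_ ((ae_restrict_iff' measurableSet_Ioi).2 (.of_forall hbound))
    exact (((hW.contDiff.continuous_deriv one_le_two).div hW.contDiff.continuous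
      fun ξ => (hpos ξ).ne').add continuous_const).aestronglyMeasurable
  have hlim := tendsto_limUnder_of_hasDerivAt_of_integrableOn_Ioi (fun ξ _ => hlog ξ) hint
  refine hasFastDecay_iff_tendsto.2 ⟨_, Real.exp_pos _, (hlim.rexp).congr fun ξ => ?_⟩
  rw [Real.exp_add, Real.exp_log (hpos ξ)]

theorem hasFastDecay_iff_eventually_le (hW : IsFront g 2 W) (hM : 0 < M)
    (hg : ∀ w ∈ Ioo (0 : ℝ) 1, |g w - w| ≤ M * w ^ 2) :
    HasFastDecay W ↔ ∃ C, ∀ᶠ w in 𝓝[>] 0, w - C * w ^ 2 ≤ frontProfile W w := by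
  simp_rw [← hW.map_atTop, eventually_map, hW.frontProfile_apply]
  constructor
  · intro hfast
    exact ⟨16 * M, (hW.eventually_deriv_add_le_of_hasFastDecay hM.le
      (fun w hw => by linarith [(abs_le.1 (hg w hw)).2]) hfast).mono fun ξ hξ => by linarith⟩
  · rintro ⟨C, hC⟩
    refine hW.hasFastDecay_of_eventually_abs_le (C := max M C) (hC.mono fun ξ hξ => ?_)
    have hlower := hW.neg_deriv_le_add_mul_sq hM
      (fun w hw => by linarith [(abs_le.1 (hg w hw)).1]) ξ
    have hM_le := mul_le_mul_of_nonneg_right (le_max_left M C) (sq_nonneg (W ξ))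
    have hC_le := mul_le_mul_of_nonneg_right (le_max_right M C) (sq_nonneg (W ξ))
    exact abs_le.2 ⟨by linarith, by linarith⟩

end IsFront

theorem IsTrajectory.lt_of_lt {κ K c : ℝ} {g h p q : ℝ → ℝ} (hp : IsTrajectory g c p)
    (hq : IsTrajectory h c q) (hg : IsMonostable κ K g) (hlt : ∀ w ∈ Ioo (0 : ℝ) 1, g w < h w)
    {w : ℝ} (hw : w ∈ Ioo (0 : ℝ) 1) : p w < q w := by
  have hsuper : IsSupersolution g c 1 q := ⟨hq.continuousOn, hq.pos, fun x hx =>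
    ⟨_, sub_le_sub_left (div_le_div_of_nonneg_right (hlt x hx).le (hq.pos x hx).le) c,
      hq.hasDerivAt x hx⟩⟩
  have hle : ∀ x ∈ Ioo (0 : ℝ) 1, p x ≤ q x := fun x hx =>
    hp.le_of_isSupersolution hg hsuper le_rfl (by rw [hp.map_one, hq.map_one])
      (Ioo_subset_Ioc_self hx)
  refine (hle w hw).lt_of_ne fun heq => ?_
  have hmin : IsLocalMin (fun x => q x - p x) w := by
    filter_upwards [Ioo_mem_nhds hw.1 hw.2] with x hx
    rw [heq, sub_self]
    exact sub_nonneg.2 (hle x hx)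
  have hzero := hmin.hasDerivAt_eq_zero ((hq.hasDerivAt w hw).fun_sub (hp.hasDerivAt w hw))
  rw [← heq] at hzero
  linarith [div_lt_div_of_pos_right (hlt w hw) (hp.pos w hw)]

theorem div_sub_div_le_mul_sub {w C x y p q : ℝ} (hw : 0 < w) (hC : 0 ≤ C) (hCw : C * w ≤ 1 / 4)
    (hx : 0 ≤ x) (hxw : x ≤ w + C * w ^ 2) (hxy : x ≤ y) (hp : w - C * w ^ 2 ≤ p) (hpq : p ≤ q) :
    x / p - y / q ≤ (1 / w + 8 * C) * (q - p) := by
  have hlow : 0 < w - C * w ^ 2 := by nlinarith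
  have hp0 : 0 < p := hlow.trans_le hp
  have hq0 : 0 < q := hp0.trans_le hpq
  have hslope : x / (p * q) ≤ 1 / w + 8 * C := calc
    x / (p * q) ≤ (w + C * w ^ 2) / ((w - C * w ^ 2) * (w - C * w ^ 2)) :=
      div_le_div₀ (hx.trans hxw) hxw (mul_pos hlow hlow)
        (mul_le_mul hp (hp.trans hpq) hlow.le hp0.le)
    _ ≤ 1 / w + 8 * C := by
      rw [div_le_iff₀ (mul_pos hlow hlow)]
      have hfactor : 0 ≤ C * w * (5 - 15 * (C * w) + 8 * (C * w) ^ 2) :=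
        mul_nonneg (by positivity) (by nlinarith)
      calc w + C * w ^ 2 ≤ w + C * w ^ 2 + w * (C * w * (5 - 15 * (C * w) + 8 * (C * w) ^ 2)) :=
            le_add_of_nonneg_right (mul_nonneg hw.le hfactor)
        _ = (1 / w + 8 * C) * ((w - C * w ^ 2) * (w - C * w ^ 2)) := by
            field_simp
            ring
  calc x / p - y / q ≤ x / p - x / q := sub_le_sub_left (div_le_div_of_nonneg_right hxy hq0.le) _
    _ = x / (p * q) * (q - p) := by field_simp
    _ ≤ (1 / w + 8 * C) * (q - p) := mul_le_mul_of_nonneg_right hslope (sub_nonneg.2 hpq)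

theorem antitoneOn_div_mul_exp_neg {G G' : ℝ → ℝ} {A b : ℝ}
    (hG : ∀ w ∈ Ioo 0 b, HasDerivAt G (G' w) w)
    (hle : ∀ w ∈ Ioo 0 b, G' w ≤ (1 / w + A) * G w) :
    AntitoneOn (fun w => G w / w * Real.exp (-(A * w))) (Ioo 0 b) := by
  have hderiv : ∀ w ∈ Ioo 0 b, HasDerivAt (fun w => G w / w * Real.exp (-(A * w)))
      ((G' w - (1 / w + A) * G w) / w * Real.exp (-(A * w))) w := by
    intro w hw
    have hw0 : w ≠ 0 := hw.1.ne'
    refine (((hG w hw).fun_div (hasDerivAt_id' w) hw0).fun_mul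
      (((hasDerivAt_id' w).const_mul A).fun_neg.exp)).congr_deriv ?_
    field_simp
    ring
  refine antitoneOn_of_hasDerivWithinAt_nonpos
    (f' := fun w => (G' w - (1 / w + A) * G w) / w * Real.exp (-(A * w)))
    (convex_Ioo 0 b) (fun w hw => (hderiv w hw).continuousAt.continuousWithinAt) ?_ ?_
  · rw [interior_Ioo]
    exact fun w hw => (hderiv w hw).hasDerivWithinAt
  · rw [interior_Ioo]
    exact fun w hw => mul_nonpos_of_nonpos_of_nonneg
      (div_nonpos_of_nonpos_of_nonneg (sub_nonpos.2 (hle w hw)) hw.1.le) (Real.exp_pos _).le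

/- The gap `q - p` satisfies `(q - p)' ≤ (1 / w + A) (q - p)`, so it is at least of order `w`,
while both profiles are within `O(w²)` of the diagonal. -/
theorem IsProfile.not_eventually_le_of_lt {κ K C : ℝ} {g h p q : ℝ → ℝ} (hp : IsProfile g 2 p)
    (hq : IsProfile h 2 q) (hg : IsMonostable κ K g) (hlt : ∀ w ∈ Ioo (0 : ℝ) 1, g w < h w)
    (hC : 0 ≤ C) (hgC : ∀ w ∈ Ioo (0 : ℝ) 1, g w ≤ w + C * w ^ 2)
    (hqC : ∀ᶠ w in 𝓝[>] 0, q w ≤ w + C * w ^ 2) :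
    ¬∀ᶠ w in 𝓝[>] 0, w - C * w ^ 2 ≤ p w := by
  intro hpC
  have hsmall : ∀ᶠ w in 𝓝[>] (0 : ℝ), w < 1 ∧ C * w ≤ 1 / 4 := by
    refine eventually_nhdsWithin_of_eventually_nhds ((gt_mem_nhds one_pos).and ?_)
    exact ((continuous_const_mul C).tendsto' 0 0 (mul_zero C)).eventually_le_const (by norm_num)
  obtain ⟨b, hb0, hb⟩ := mem_nhdsGT_iff_exists_Ioo_subset.1 ((hsmall.and hpC).and hqC)
  have hunit : ∀ w ∈ Ioo 0 b, w ∈ Ioo (0 : ℝ) 1 := fun w hw => ⟨hw.1, (hb hw).1.1.1⟩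
  have hpq : ∀ w ∈ Ioo 0 b, p w < q w := fun w hw =>
    hp.toIsTrajectory.lt_of_lt hq.toIsTrajectory hg hlt (hunit w hw)
  set F : ℝ → ℝ := fun w => (q w - p w) / w * Real.exp (-(8 * C * w))
  have hanti : AntitoneOn F (Ioo 0 b) := by
    refine antitoneOn_div_mul_exp_neg
      (fun w hw => (hq.hasDerivAt w (hunit w hw)).fun_sub (hp.hasDerivAt w (hunit w hw)))
      fun w hw => ?_
    obtain ⟨⟨⟨-, hCw⟩, hpw⟩, -⟩ := hb hw
    linarith [div_sub_div_le_mul_sub hw.1 hC hCw (hg.pos (hunit w hw)).le (hgC w (hunit w hw))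
      (hlt w (hunit w hw)).le hpw (hpq w hw).le]
  have hFle : ∀ w ∈ Ioo 0 b, F w ≤ 2 * C * w := by
    intro w hw
    have hgap : (q w - p w) / w ≤ 2 * C * w := by
      rw [div_le_iff₀ hw.1]
      linarith [(hb hw).1.2, show q w ≤ w + C * w ^ 2 from (hb hw).2]
    exact (mul_le_of_le_one_right (div_nonneg (sub_nonneg.2 (hpq w hw).le) hw.1.le)
      (Real.exp_le_one_iff.2 (neg_nonpos.2 (by have := hw.1; positivity)))).trans hgap
  have hmid : b / 2 ∈ Ioo 0 b := ⟨half_pos hb0, half_lt_self hb0⟩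
  have hFmid : 0 < F (b / 2) :=
    mul_pos (div_pos (sub_pos.2 (hpq _ hmid)) hmid.1) (Real.exp_pos _)
  refine hFmid.not_ge (ge_of_tendsto (f := fun w => 2 * C * w) (x := 𝓝[>] 0) ?_ ?_)
  · exact tendsto_nhdsWithin_of_tendsto_nhds
      ((continuous_const_mul (2 * C)).tendsto' 0 0 (mul_zero _))
  · filter_upwards [Ioo_mem_nhdsGT hmid.1] with w hw
    have hwb : w ∈ Ioo 0 b := ⟨hw.1, hw.2.trans hmid.2⟩
    exact (hanti hwb hmid hw.2.le).trans (hFle w hwb)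

/-- A family of monostable nonlinearities `f(·; s)`, `s ≥ 0`, with slope `1` at `0`, strictly
increasing in `s`, at a rate bounded by `L w² (1 - w)`. -/
structure IsMonostableFamily (κ L : ℝ) (f : ℝ → ℝ → ℝ) : Prop where
  exists_isMonostable : ∀ s, 0 ≤ s → ∃ K, IsMonostable κ K fun w => f w s
  exists_abs_sub_id_le : ∀ s, 0 ≤ s → ∃ M > 0, ∀ w ∈ Ioo (0 : ℝ) 1, |f w s - w| ≤ M * w ^ 2
  sub_le : ∀ s t, 0 ≤ s → s ≤ t → ∀ w ∈ Ioo (0 : ℝ) 1,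
    f w t - f w s ≤ L * (t - s) * (w ^ 2 * (1 - w))
  strictMono : ∀ s t, 0 ≤ s → s < t → ∀ w ∈ Ioo (0 : ℝ) 1, f w s < f w t

namespace IsMonostableFamily

variable {κ L s t : ℝ} {f : ℝ → ℝ → ℝ} {cstar : ℝ → ℝ}

theorem const_pos (hf : IsMonostableFamily κ L f) : 0 < L := by
  have hhalf : (1 / 2 : ℝ) ∈ Ioo (0 : ℝ) 1 := by norm_num
  linarith [hf.sub_le 0 1 le_rfl zero_le_one _ hhalf, hf.strictMono 0 1 le_rfl one_pos _ hhalf]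

theorem sub_le_mul_one_sub (hf : IsMonostableFamily κ L f) (hs : 0 ≤ s) (hst : s ≤ t) {w : ℝ}
    (hw : w ∈ Ioo (0 : ℝ) 1) : f w t - f w s ≤ L * (t - s) * (w * (1 - w)) := by
  refine (hf.sub_le s t hs hst w hw).trans (mul_le_mul_of_nonneg_left ?_
    (mul_nonneg hf.const_pos.le (sub_nonneg.2 hst)))
  exact mul_le_mul_of_nonneg_right (pow_le_of_le_one hw.1.le hw.2.le two_ne_zero)
    (sub_nonneg.2 hw.2.le)

theorem monotoneOn_speed (hf : IsMonostableFamily κ L f)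
    (hmin : ∀ s, 0 ≤ s → IsMinimalSpeed (fun w => f w s) (cstar s)) :
    MonotoneOn cstar (Ici 0) := by
  intro s hs t ht hst
  rcases hst.eq_or_lt with rfl | hlt
  · rfl
  obtain ⟨_, hgs⟩ := hf.exists_isMonostable s hs
  obtain ⟨_, hgt⟩ := hf.exists_isMonostable t ht
  obtain ⟨p, hp⟩ := (hmin t ht).exists_isProfile hgt
  obtain ⟨q, hq⟩ := hp.exists_isProfile_of_le_add (δ := 0) hgs fun w hw => by
    simpa using (hf.strictMono s t hs hlt w hw).le
  simpa using (hmin s hs).le_of_isProfile hgs hq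

theorem exists_lipschitzOnWith_speed (hf : IsMonostableFamily κ L f)
    (hmin : ∀ s, 0 ≤ s → IsMinimalSpeed (fun w => f w s) (cstar s)) (b : ℝ) :
    ∃ C, LipschitzOnWith C cstar (Icc 0 b) := by
  obtain ⟨_, hg₀⟩ := hf.exists_isMonostable 0 le_rfl
  obtain ⟨ε, hε, hεκ⟩ := exists_pos_mul_add_le (cstar b) hg₀.const_pos
  refine ⟨_, LipschitzOnWith.of_le_add_mul' (L / ε) fun t ht s hs => ?_⟩
  have hLε : 0 ≤ L / ε := div_nonneg hf.const_pos.le hε.le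
  rcases le_total t s with hts | hst
  · exact (hf.monotoneOn_speed hmin ht.1 hs.1 hts).trans
      (le_add_of_nonneg_right (mul_nonneg hLε dist_nonneg))
  rw [Real.dist_eq, abs_of_nonneg (sub_nonneg.2 hst)]
  obtain ⟨_, hgs⟩ := hf.exists_isMonostable s hs.1
  obtain ⟨_, hgt⟩ := hf.exists_isMonostable t ht.1
  obtain ⟨p, hp⟩ := (hmin s hs.1).exists_isProfile hgs
  have hspeed : ε * (cstar s + ε) ≤ κ := le_trans (mul_le_mul_of_nonneg_left
    (add_le_add_left (hf.monotoneOn_speed hmin hs.1 (hs.1.trans hs.2) hs.2) ε) hε.le) hεκ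
  obtain ⟨q, hq⟩ := hp.exists_isProfile_of_le_add (δ := L / ε * (t - s)) hgt fun w hw => by
    calc f w t ≤ f w s + L * (t - s) * (w * (1 - w)) := by
          linarith [hf.sub_le_mul_one_sub hs.1 hst hw]
      _ = f w s + L / ε * (t - s) * (ε * (w * (1 - w))) := by field_simp
      _ ≤ f w s + L / ε * (t - s) * p w := by
          have hbarrier := hp.toIsTrajectory.barrier_le hgs hε hspeed (Ioo_subset_Ioc_self hw)
          gcongr
  exact (hmin t ht.1).le_of_isProfile hgt hq

theorem exists_threshold (hf : IsMonostableFamily κ L f)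
    (hmin : ∀ s, 0 ≤ s → IsMinimalSpeed (fun w => f w s) (cstar s))
    (hs : 0 ≤ s) (hcs : cstar s = 2) (hst : s < t) (hct : 2 < cstar t) :
    ∃ u, s ≤ u ∧ u < t ∧ cstar u = 2 ∧ ∀ v, u < v → 2 < cstar v := by
  obtain ⟨C, hC⟩ := hf.exists_lipschitzOnWith_speed hmin t
  have hclosed : IsClosed (Icc 0 t ∩ cstar ⁻¹' {2}) :=
    hC.continuousOn.preimage_isClosed_of_isClosed isClosed_Icc isClosed_singleton
  obtain ⟨u, ⟨⟨hu0, hut⟩, hu⟩, hmax⟩ :=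
    (isCompact_Icc.of_isClosed_subset hclosed inter_subset_left).exists_isGreatest
      ⟨s, ⟨hs, hst.le⟩, hcs⟩
  refine ⟨u, hmax ⟨⟨hs, hst.le⟩, hcs⟩, hut.lt_of_ne ?_, hu, fun v huv => ?_⟩
  · rintro rfl
    exact hct.ne' hu
  have hv0 : 0 ≤ v := hu0.trans huv.le
  rcases le_total v t with hvt | htv
  · exact (hmin v hv0).1.lt_of_ne fun hv => huv.not_ge (hmax ⟨⟨hv0, hvt⟩, hv.symm⟩)
  · exact hct.trans_le (hf.monotoneOn_speed hmin (hs.trans hst.le) hv0 htv)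

theorem exists_speed_eq_two_of_lt {M b : ℝ} {p : ℝ → ℝ} (hf : IsMonostableFamily κ L f)
    (hmin : ∀ s, 0 ≤ s → IsMinimalSpeed (fun w => f w s) (cstar s)) (hs : 0 ≤ s)
    (hM : 0 ≤ M) (hfM : ∀ w ∈ Ioo (0 : ℝ) 1, f w s ≤ w + M * w ^ 2)
    (hp : IsProfile (fun w => f w s) 2 p) (hb : b ∈ Ioo (0 : ℝ) 1) (hMb : 8 * (M + L) * b ≤ 1)
    (hlt : p b < b - 2 * (M + L) * b ^ 2) : ∃ t > s, cstar t = 2 := by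
  have hL := hf.const_pos
  set δ := b - 2 * (M + L) * b ^ 2 - p b
  have hδ0 : 0 < δ := sub_pos.2 hlt
  set r := min 1 (δ ^ 2 / L)
  have hr0 : 0 < r := lt_min one_pos (by positivity)
  have hLr : L * r ≤ L := mul_le_of_le_one_right hL.le (min_le_left _ _)
  have hLrδ : L * r ≤ δ ^ 2 := by
    rw [mul_comm, ← le_div_iff₀ hL]
    exact min_le_right _ _
  have hsr : 0 ≤ s + r := add_nonneg hs hr0.le
  obtain ⟨_, hgs⟩ := hf.exists_isMonostable s hs
  obtain ⟨_, hgr⟩ := hf.exists_isMonostable (s + r) hsr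
  have hincr : ∀ w ∈ Ioo (0 : ℝ) 1, f w (s + r) ≤ f w s + L * r * (w ^ 2 * (1 - w)) :=
    fun w hw => by
      have := hf.sub_le s (s + r) hs (le_add_of_nonneg_right hr0.le) w hw
      rw [add_sub_cancel_left] at this
      linarith
  have htangent : ∀ w ∈ Ioo (0 : ℝ) 1, f w (s + r) ≤ w + (M + L) * w ^ 2 := fun w hw => by
    have : L * r * (w ^ 2 * (1 - w)) ≤ L * w ^ 2 := mul_le_mul hLr
      (mul_le_of_le_one_right (sq_nonneg w) (sub_le_self 1 hw.1.le))
      (mul_nonneg (sq_nonneg w) (sub_nonneg.2 hw.2.le)) hL.le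
    linarith [hincr w hw, hfM w hw]
  have hincr_sq : ∀ w ∈ Ioo (0 : ℝ) 1, f w (s + r) ≤ f w s + δ ^ 2 * (1 - w) := fun w hw => by
    have : L * r * (w ^ 2 * (1 - w)) ≤ δ ^ 2 * (1 - w) := mul_le_mul hLrδ
      (mul_le_of_le_one_left (sub_nonneg.2 hw.2.le) (pow_le_one₀ hw.1.le hw.2.le))
      (mul_nonneg (sq_nonneg w) (sub_nonneg.2 hw.2.le)) (sq_nonneg δ)
    linarith [hincr w hw]
  obtain ⟨q, hq⟩ := hp.exists_isProfile_of_room hgs hgr (add_nonneg hM hL.le) hb hMb hδ0.le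
    (by linarith [mul_nonneg hδ0.le hb.1.le])
    (fun w hw => htangent w (Ioo_subset_Ioo_right hb.2.le hw)) hincr_sq
  exact ⟨s + r, lt_add_of_pos_right s hr0, (hmin (s + r) hsr).eq_two_of_isProfile hgr hq⟩

theorem hasFastDecay_of_threshold {W : ℝ → ℝ} (hf : IsMonostableFamily κ L f)
    (hmin : ∀ s, 0 ≤ s → IsMinimalSpeed (fun w => f w s) (cstar s)) (hs : 0 ≤ s)
    (hW : IsFront (fun w => f w s) 2 W) (habove : ∀ t, s < t → 2 < cstar t) :
    HasFastDecay W := by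
  obtain ⟨M, hM, hfM⟩ := hf.exists_abs_sub_id_le s hs
  obtain ⟨_, hgs⟩ := hf.exists_isMonostable s hs
  refine (hW.hasFastDecay_iff_eventually_le hM hfM).2 ⟨2 * (M + L), ?_⟩
  have hML : 0 < 8 * (M + L) := by linarith [hf.const_pos]
  filter_upwards [Ioo_mem_nhdsGT (lt_min one_pos (one_div_pos.2 hML))] with b hb
  by_contra! hlt
  obtain ⟨t, hst, ht⟩ := hf.exists_speed_eq_two_of_lt hmin hs hM.le
    (fun w hw => by linarith [(abs_le.1 (hfM w hw)).2]) (hW.isProfile_frontProfile hgs)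
    ⟨hb.1, hb.2.trans_le (min_le_left _ _)⟩
    ((le_div_iff₀' hML).1 (hb.2.le.trans (min_le_right _ _))) hlt
  exact (habove t hst).ne' ht

theorem not_hasFastDecay_of_lt {V W : ℝ → ℝ} (hf : IsMonostableFamily κ L f) (hs : 0 ≤ s)
    (hst : s < t) (hV : IsFront (fun w => f w t) 2 V) (hW : IsFront (fun w => f w s) 2 W) :
    ¬HasFastDecay W := by
  obtain ⟨M, hM, hfM⟩ := hf.exists_abs_sub_id_le s hs
  obtain ⟨N, hN, hfN⟩ := hf.exists_abs_sub_id_le t (hs.trans hst.le)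
  obtain ⟨_, hgs⟩ := hf.exists_isMonostable s hs
  obtain ⟨_, hgt⟩ := hf.exists_isMonostable t (hs.trans hst.le)
  rw [hW.hasFastDecay_iff_eventually_le hM hfM]
  rintro ⟨C, hC⟩
  set A := max (max M N) C
  have hMA : M ≤ A := (le_max_left M N).trans (le_max_left _ C)
  have hNA : N ≤ A := (le_max_right M N).trans (le_max_left _ C)
  have hmono : ∀ {B : ℝ}, B ≤ A → ∀ w : ℝ, B * w ^ 2 ≤ A * w ^ 2 := fun h w =>
    mul_le_mul_of_nonneg_right h (sq_nonneg w)
  refine (hW.isProfile_frontProfile hgs).not_eventually_le_of_lt (hV.isProfile_frontProfile hgt)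
    hgs (hf.strictMono s t hs hst) (hM.le.trans hMA) (fun w hw => ?_) ?_
    (hC.mono fun w hw => ?_)
  · linarith [(abs_le.1 (hfM w hw)).2, hmono hMA w]
  · rw [← hV.map_atTop, eventually_map]
    refine .of_forall fun ξ => ?_
    rw [hV.frontProfile_apply]
    linarith [hmono hNA (V ξ), hV.neg_deriv_le_add_mul_sq hN
      (fun w hw => by linarith [(abs_le.1 (hfN w hw)).1]) ξ]
  · linarith [hmono (le_max_right (max M N) C) w]

end IsMonostableFamily

theorem exists_pos_le_and_le_of_tendsto {φ : ℝ → ℝ} {a b la lb : ℝ} (hab : a < b)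
    (hφ : ContinuousOn φ (Ioo a b)) (hpos : ∀ w ∈ Ioo a b, 0 < φ w) (hla : 0 < la) (hlb : 0 < lb)
    (ha : Tendsto φ (𝓝[>] a) (𝓝 la)) (hb : Tendsto φ (𝓝[<] b) (𝓝 lb)) :
    ∃ m > 0, ∃ M, ∀ w ∈ Ioo a b, m ≤ φ w ∧ φ w ≤ M := by
  have hcont := continuousOn_Icc_extendFrom_Ioo hφ ha hb
  have heq : ∀ w ∈ Ioo a b, extendFrom (Ioo a b) φ w = φ w := fun w hw =>
    extendFrom_eq (subset_closure hw) (hφ w hw)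
  have hpos' : ∀ w ∈ Icc a b, 0 < extendFrom (Ioo a b) φ w := by
    intro w hw
    rcases hw.1.eq_or_lt with rfl | haw
    · rwa [eq_lim_at_left_extendFrom_Ioo hab ha]
    rcases hw.2.eq_or_lt with rfl | hwb
    · rwa [eq_lim_at_right_extendFrom_Ioo hab hb]
    · exact heq w ⟨haw, hwb⟩ ▸ hpos w ⟨haw, hwb⟩
  obtain ⟨x, hx, hmin⟩ := isCompact_Icc.exists_isMinOn (nonempty_Icc.2 hab.le) hcont
  obtain ⟨y, -, hmax⟩ := isCompact_Icc.exists_isMaxOn (nonempty_Icc.2 hab.le) hcont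
  refine ⟨_, hpos' x hx, extendFrom (Ioo a b) φ y, fun w hw => ?_⟩
  rw [← heq w hw]
  exact ⟨hmin (Ioo_subset_Icc_self hw), hmax (Ioo_subset_Icc_self hw)⟩

theorem exists_isMonostable_of_hasDerivWithinAt {g : ℝ → ℝ} {a b : ℝ}
    (hg : ContinuousOn g (Ioo 0 1)) (hg0 : g 0 = 0) (hg1 : g 1 = 0)
    (ha : HasDerivWithinAt g a (Ioo 0 1) 0) (hb : HasDerivWithinAt g b (Ioo 0 1) 1)
    (ha0 : 0 < a) (hb0 : b < 0) (hpos : ∀ w ∈ Ioo (0 : ℝ) 1, 0 < g w) :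
    ∃ κ K, IsMonostable κ K g := by
  rw [hasDerivWithinAt_iff_tendsto_slope' (by simp), nhdsWithin_Ioo_eq_nhdsGT one_pos] at ha
  rw [hasDerivWithinAt_iff_tendsto_slope' (by simp), nhdsWithin_Ioo_eq_nhdsLT one_pos] at hb
  have hzero : Tendsto (fun w => g w / (w * (1 - w))) (𝓝[>] 0) (𝓝 a) := by
    have hone_sub : Tendsto (fun w : ℝ => 1 - w) (𝓝[>] 0) (𝓝 1) :=
      tendsto_nhdsWithin_of_tendsto_nhds (Continuous.tendsto' (by fun_prop) _ _ (sub_zero 1))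
    convert ha.div hone_sub one_ne_zero using 2 with w
    · rw [Pi.div_apply, slope_def_field, hg0, sub_zero, sub_zero, div_div]
    · rw [div_one]
  have hone : Tendsto (fun w => g w / (w * (1 - w))) (𝓝[<] 1) (𝓝 (-b)) := by
    have hid : Tendsto (fun w : ℝ => w) (𝓝[<] 1) (𝓝 1) :=
      tendsto_nhdsWithin_of_tendsto_nhds tendsto_id
    convert (hb.div hid one_ne_zero).neg using 2 with w
    · rw [Pi.div_apply, slope_def_field, hg1, sub_zero, div_div, ← div_neg]
      ring
    · rw [div_one]
  obtain ⟨κ, hκ, K, hbound⟩ := exists_pos_le_and_le_of_tendsto one_pos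
    (hg.div (by fun_prop) fun w hw => (mul_one_sub_pos hw).ne')
    (fun w hw => div_pos (hpos w hw) (mul_one_sub_pos hw)) ha0 (neg_pos.2 hb0) hzero hone
  exact ⟨κ, K, hκ, hg, fun w hw => (le_div_iff₀ (mul_one_sub_pos hw)).1 (hbound w hw).1,
    fun w hw => (div_le_iff₀ (mul_one_sub_pos hw)).1 (hbound w hw).2⟩

theorem abs_sub_derivWithin_mul_le {φ : ℝ → ℝ} {C w : ℝ} (hφ : ContDiffOn ℝ 2 φ (Icc 0 1))
    (h0 : φ 0 = 0) (hC : ∀ x ∈ Icc (0 : ℝ) 1, |iteratedDerivWithin 2 φ (Icc 0 1) x| ≤ C)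
    (hw : w ∈ Icc (0 : ℝ) 1) : |φ w - derivWithin φ (Icc 0 1) 0 * w| ≤ C * w ^ 2 := by
  have htaylor := taylor_mean_remainder_bound (n := 1) zero_le_one (mod_cast hφ) hw hC
  simpa [taylorWithinEval_succ, taylor_within_zero_eval, h0, iteratedDerivWithin_one, mul_comm,
    Real.norm_eq_abs] using htaylor

theorem le_mul_sq_mul_one_sub {φ : ℝ → ℝ} {C w : ℝ} (hφ : ContDiffOn ℝ 2 φ (Icc 0 1))
    (h0 : φ 0 = 0) (h1 : φ 1 = 0) (hd : derivWithin φ (Icc 0 1) 0 = 0)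
    (hC₁ : ∀ x ∈ Icc (0 : ℝ) 1, |derivWithin φ (Icc 0 1) x| ≤ C)
    (hC₂ : ∀ x ∈ Icc (0 : ℝ) 1, |iteratedDerivWithin 2 φ (Icc 0 1) x| ≤ C)
    (hw : w ∈ Icc (0 : ℝ) 1) : φ w ≤ 3 * C * (w ^ 2 * (1 - w)) := by
  have hw1 : 0 ≤ 1 - w := sub_nonneg.2 hw.2
  have hC : 0 ≤ C := (abs_nonneg _).trans (hC₁ w hw)
  have hzero : φ w ≤ C * w ^ 2 := by
    simpa [hd] using (le_abs_self _).trans (abs_sub_derivWithin_mul_le hφ h0 hC₂ hw)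
  have hone : φ w ≤ C * (1 - w) := by
    have := (convex_Icc (0 : ℝ) 1).norm_image_sub_le_of_norm_derivWithin_le
      (hφ.differentiableOn two_ne_zero) hC₁ (right_mem_Icc.2 zero_le_one) hw
    rw [h1, sub_zero, Real.norm_eq_abs, Real.norm_eq_abs, abs_sub_comm, abs_of_nonneg hw1] at this
    exact (le_abs_self _).trans this
  have hw2 : 0 ≤ 1 - w ^ 2 := sub_nonneg.2 (pow_le_one₀ hw.1 hw.2)
  calc φ w = (1 - w ^ 2) * φ w + w ^ 2 * φ w := by ring
    _ ≤ (1 - w ^ 2) * (C * w ^ 2) + w ^ 2 * (C * (1 - w)) :=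
      add_le_add (mul_le_mul_of_nonneg_left hzero hw2)
        (mul_le_mul_of_nonneg_left hone (sq_nonneg w))
    _ = 3 * C * (w ^ 2 * (1 - w)) - C * (w ^ 2 * (1 - w)) * (1 - w) := by ring
    _ ≤ 3 * C * (w ^ 2 * (1 - w)) := sub_le_self _ (by positivity)

/-- Condition (A1) on a single nonlinearity: `C²`, monostable and with slope `1` at `0`. -/
structure IsSmoothMonostable (g : ℝ → ℝ) : Prop where
  contDiffOn : ContDiffOn ℝ 2 g (Icc 0 1)
  map_zero : g 0 = 0
  map_one : g 1 = 0
  derivWithin_zero : derivWithin g (Icc 0 1) 0 = 1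
  derivWithin_one_neg : derivWithin g (Icc 0 1) 1 < 0
  pos : ∀ w ∈ Ioo (0 : ℝ) 1, 0 < g w

namespace IsSmoothMonostable

variable {g h : ℝ → ℝ} {C : ℝ}

theorem differentiableOn (hg : IsSmoothMonostable g) : DifferentiableOn ℝ g (Icc 0 1) :=
  hg.contDiffOn.differentiableOn two_ne_zero

theorem exists_isMonostable (hg : IsSmoothMonostable g) : ∃ κ K, IsMonostable κ K g := by
  have hderiv : ∀ w ∈ Icc (0 : ℝ) 1, HasDerivWithinAt g (derivWithin g (Icc 0 1) w) (Ioo 0 1) w :=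
    fun w hw => (hg.differentiableOn w hw).hasDerivWithinAt.mono Ioo_subset_Icc_self
  exact exists_isMonostable_of_hasDerivWithinAt
    (hg.contDiffOn.continuousOn.mono Ioo_subset_Icc_self) hg.map_zero hg.map_one
    (hderiv 0 (by simp)) (hderiv 1 (by simp)) (one_pos.trans_eq hg.derivWithin_zero.symm)
    hg.derivWithin_one_neg hg.pos

theorem exists_abs_sub_id_le (hg : IsSmoothMonostable g) :
    ∃ M > 0, ∀ w ∈ Ioo (0 : ℝ) 1, |g w - w| ≤ M * w ^ 2 := by
  obtain ⟨M, hM⟩ := isCompact_Icc.exists_bound_of_continuousOn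
    (hg.contDiffOn.continuousOn_iteratedDerivWithin (m := 2) le_rfl (uniqueDiffOn_Icc one_pos))
  refine ⟨max M 1, by positivity, fun w hw => ?_⟩
  simpa [hg.derivWithin_zero] using abs_sub_derivWithin_mul_le hg.contDiffOn hg.map_zero
    (fun x hx => (hM x hx).trans (le_max_left M 1)) (Ioo_subset_Icc_self hw)

theorem sub_le (hg : IsSmoothMonostable g) (hh : IsSmoothMonostable h)
    (hC₁ : ∀ w ∈ Icc (0 : ℝ) 1,
      |derivWithin h (Icc 0 1) w - derivWithin g (Icc 0 1) w| ≤ C)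
    (hC₂ : ∀ w ∈ Icc (0 : ℝ) 1,
      |iteratedDerivWithin 2 h (Icc 0 1) w - iteratedDerivWithin 2 g (Icc 0 1) w| ≤ C)
    {w : ℝ} (hw : w ∈ Icc (0 : ℝ) 1) : h w - g w ≤ 3 * C * (w ^ 2 * (1 - w)) := by
  have hderiv : ∀ x ∈ Icc (0 : ℝ) 1, derivWithin (h - g) (Icc 0 1) x =
      derivWithin h (Icc 0 1) x - derivWithin g (Icc 0 1) x := fun x hx =>
    derivWithin_sub (hh.differentiableOn x hx) (hg.differentiableOn x hx)
  refine le_mul_sq_mul_one_sub (φ := h - g) (hh.contDiffOn.sub hg.contDiffOn)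
    (by simp [hg.map_zero, hh.map_zero]) (by simp [hg.map_one, hh.map_one]) ?_ ?_ ?_ hw
  · rw [hderiv 0 (by simp), hh.derivWithin_zero, hg.derivWithin_zero, sub_self]
  · exact fun x hx => hderiv x hx ▸ hC₁ x hx
  · intro x hx
    rw [iteratedDerivWithin_sub hx (uniqueDiffOn_Icc one_pos) (hh.contDiffOn x hx)
      (hg.contDiffOn x hx)]
    exact hC₂ x hx

end IsSmoothMonostable

theorem exists_isMonostableFamily {f : ℝ → ℝ → ℝ} {L₀ : ℝ}
    (hf : ∀ s, 0 ≤ s → IsSmoothMonostable fun w => f w s)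
    (hlip : ∀ n : ℕ, n ≤ 2 → ∀ w ∈ Icc (0 : ℝ) 1, ∀ s t : ℝ, 0 ≤ s → 0 ≤ t →
      |iteratedDerivWithin n (fun w => f w s) (Icc 0 1) w -
        iteratedDerivWithin n (fun w => f w t) (Icc 0 1) w| ≤ L₀ * |s - t|)
    (hmono : ∀ s t, 0 ≤ s → s < t → ∀ w ∈ Ioo (0 : ℝ) 1, f w s < f w t) :
    ∃ κ L, IsMonostableFamily κ L f := by
  obtain ⟨κ, _, h₀⟩ := (hf 0 le_rfl).exists_isMonostable
  refine ⟨κ, 3 * L₀, fun s hs => ?_, fun s hs => (hf s hs).exists_abs_sub_id_le,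
    fun s t hs hst w hw => ?_, hmono⟩
  · obtain ⟨_, K, hK⟩ := (hf s hs).exists_isMonostable
    refine ⟨K, h₀.const_pos, hK.continuousOn, fun w hw => (h₀.le_map w hw).trans ?_, hK.map_le⟩
    rcases hs.eq_or_lt with rfl | hs0
    exacts [le_rfl, (hmono 0 s le_rfl hs0 w hw).le]
  · have ht : 0 ≤ t := hs.trans hst
    have hbound : ∀ n ≤ 2, ∀ w ∈ Icc (0 : ℝ) 1,
        |iteratedDerivWithin n (fun w => f w t) (Icc 0 1) w -
          iteratedDerivWithin n (fun w => f w s) (Icc 0 1) w| ≤ L₀ * (t - s) := fun n hn w hw =>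
      abs_of_nonneg (sub_nonneg.2 hst) ▸ hlip n hn w hw t s ht hs
    have hbound_deriv := hbound 1 one_le_two
    simp only [iteratedDerivWithin_one] at hbound_deriv
    rw [mul_assoc 3]
    exact (hf s hs).sub_le (hf t ht) hbound_deriv (hbound 2 le_rfl) (Ioo_subset_Icc_self hw)

theorem threshold_scalar_equation_general {f : ℝ → ℝ → ℝ} {cstar : ℝ → ℝ} {s₁ s₂ κ L : ℝ}
    (hf : IsMonostableFamily κ L f)
    (hmin : ∀ s, 0 ≤ s → IsMinimalSpeed (fun w => f w s) (cstar s))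
    (hs₁ : 0 ≤ s₁) (hc₁ : cstar s₁ = 2) (hs₂ : s₁ < s₂) (hc₂ : 2 < cstar s₂) :
    ∃ sstar, s₁ ≤ sstar ∧ sstar < s₂ ∧ (∀ s, 0 ≤ s → s ≤ sstar → cstar s = 2) ∧
      (∀ s, sstar < s → 2 < cstar s) ∧
      ∀ s, 0 ≤ s → ∀ W, IsFront (fun w => f w s) (cstar s) W → (HasFastDecay W ↔ s = sstar) := by
  obtain ⟨sstar, h₁, h₂, hcrit, habove⟩ := hf.exists_threshold hmin hs₁ hc₁ hs₂ hc₂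
  have hstar : 0 ≤ sstar := hs₁.trans h₁
  have hbelow : ∀ s, 0 ≤ s → s ≤ sstar → cstar s = 2 := fun s hs hle =>
    ((hf.monotoneOn_speed hmin hs hstar hle).trans_eq hcrit).antisymm (hmin s hs).1
  refine ⟨sstar, h₁, h₂, hbelow, habove, fun s hs W hW => ⟨fun hfast => ?_, ?_⟩⟩
  · rcases lt_trichotomy s sstar with hlt | heq | hgt
    · obtain ⟨V, hV⟩ := ((hmin sstar hstar).2 2).2 hcrit.le
      exact absurd hfast (hf.not_hasFastDecay_of_lt hs hlt hV (hbelow s hs hlt.le ▸ hW))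
    · exact heq
    · obtain ⟨M, -, hM⟩ := hf.exists_abs_sub_id_le s hs
      exact absurd hfast (hW.not_hasFastDecay_of_two_lt (M := M) (habove s hgt)
        fun w hw => by linarith [(abs_le.1 (hM w hw)).2])
  · rintro rfl
    exact hf.hasFastDecay_of_threshold hmin hs (hcrit ▸ hW) habove

/-- Theorem: under (A1)-(A5) there is a threshold `s* ∈ [s₁, s₂)` for linear vs. nonlinear
speed selection, and the minimal front decays like `B e^{-ξ}` (with `B > 0`) iff `s = s*`. -/
theorem threshold_scalar_equation
    (f : ℝ → ℝ → ℝ) (cstar : ℝ → ℝ) (s₁ s₂ : ℝ)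
    -- (A1) monostable condition, with ∂_w f(0;s) = 1
    (hA1 : ∀ s, 0 ≤ s →
      ContDiffOn ℝ 2 (fun w => f w s) (Icc 0 1) ∧
      f 0 s = 0 ∧ f 1 s = 0 ∧
      derivWithin (fun w => f w s) (Icc 0 1) 0 = 1 ∧
      derivWithin (fun w => f w s) (Icc 0 1) 1 < 0 ∧
      (∀ w ∈ Ioo (0:ℝ) 1, 0 < f w s))
    -- (A2) Lipschitz continuity in the parameter, for f, f', f''
    (hA2 : ∃ L₀ > (0:ℝ), ∀ n : ℕ, n ≤ 2 → ∀ w ∈ Icc (0:ℝ) 1, ∀ sa sb : ℝ, 0 ≤ sa → 0 ≤ sb →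
      |iteratedDerivWithin n (fun w => f w sa) (Icc 0 1) w -
        iteratedDerivWithin n (fun w => f w sb) (Icc 0 1) w| ≤ L₀ * |sa - sb|)
    -- (A3) monotonicity condition
    (hA3 : ∀ s sh : ℝ, 0 ≤ s → s < sh →
      (∀ w ∈ Ioo (0:ℝ) 1, f w s < f w sh) ∧
      iteratedDerivWithin 2 (fun w => f w s) (Icc 0 1) 0 <
        iteratedDerivWithin 2 (fun w => f w sh) (Icc 0 1) 0)
    -- minimal-speed characterization: fronts exist exactly for speeds c ≥ c*(s) ≥ 2
    (hmin : ∀ s, 0 ≤ s → 2 ≤ cstar s ∧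
      ∀ c, (∃ W : ℝ → ℝ, IsFront (fun w => f w s) c W) ↔ cstar s ≤ c)
    -- the minimal front is unique up to translation
    (huniq : ∀ s, 0 ≤ s → ∀ W₁ W₂ : ℝ → ℝ, IsFront (fun w => f w s) (cstar s) W₁ →
      IsFront (fun w => f w s) (cstar s) W₂ → ∃ τ, ∀ ξ, W₂ ξ = W₁ (ξ + τ))
    -- (A4) KPP condition at s₁, hence linear selection there
    (hs₁ : 0 < s₁) (hA4 : ∀ w ∈ Icc (0:ℝ) 1, f w s₁ ≤ w) (hc₁ : cstar s₁ = 2)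
    -- (A5) nonlinear selection at some s₂ > s₁
    (hs₂ : s₁ < s₂) (hc₂ : 2 < cstar s₂) :
    ∃ sstar : ℝ, s₁ ≤ sstar ∧ sstar < s₂ ∧
      (∀ s, 0 ≤ s → s ≤ sstar → cstar s = 2) ∧
      (∀ s, sstar < s → 2 < cstar s) ∧
      (∀ s, 0 ≤ s → ∀ W : ℝ → ℝ, IsFront (fun w => f w s) (cstar s) W →
        ((∃ B > (0:ℝ),
            (fun ξ => W ξ - B * Real.exp (-ξ)) =o[atTop] fun ξ => Real.exp (-ξ)) ↔
          s = sstar)) := by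
  obtain ⟨_, -, hlip⟩ := hA2
  obtain ⟨_, _, hf⟩ := exists_isMonostableFamily
    (fun s hs => let ⟨h, h₀, h₁, hd₀, hd₁, hpos⟩ := hA1 s hs; ⟨h, h₀, h₁, hd₀, hd₁, hpos⟩) hlip
    fun s t hs hst => (hA3 s t hs hst).1
  exact threshold_scalar_equation_general hf hmin hs₁.le hc₁ hs₂ hc₂
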